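/- arXiv:1504.05501 — 13 statements merged into one kernel-verified Lean document; each statement's English description precedes it below -/
import Mathlib

section
/- Let 0<b<1 and let η:[b,1]→ℝ be a continuously differentiable function, not identically zero, with η(b)=η(1)=0. Then there exists δ_η<1 such that for every δ with δ_η<δ≤1, the second variation E₂(η,δ,b) := 2π ∫_b^1 [ (η'(r))² − δ (η(r)/r + η'(r))² ] r dr is strictly negative. -/
/-! For `η ∈ C¹[a, c]`, integrating `(η/r + η')² r = (η')² r + η²/r + (η²)'` shows that the splay
energy exceeds the Dirichlet energy by `∫ η²/r + η(c)² - η(a)²`. This excess is positive as soon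
as `|η a| ≤ |η c|` and `η ≢ 0`. The second variation is affine in `δ`, so it changes sign
exactly at the ratio of the two energies, which therefore lies below `1`. -/

open Real Set

section

open intervalIntegral
open MeasureTheory (volume)

variable {η η' : ℝ → ℝ} {a c δ : ℝ}

/-- The Dirichlet energy, per unit angle, of the radial perturbation with derivative `η'` on the
annulus `a ≤ r ≤ c`. -/
noncomputable def radialDirichletEnergy (η' : ℝ → ℝ) (a c : ℝ) : ℝ :=
  ∫ r in a..c, η' r ^ 2 * r

/-- The splay energy, per unit angle, of the radial perturbation `η` with derivative `η'`:
`η/r + η'` is the divergence of the vector field `η(r) e_r`, which to first order is, up to sign,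
that of the perturbed director. -/
noncomputable def radialSplayEnergy (η η' : ℝ → ℝ) (a c : ℝ) : ℝ :=
  ∫ r in a..c, (η r / r + η' r) ^ 2 * r

/-- The second variation `E₂` of the Oseen–Frank energy with elastic anisotropy `δ`, on the annulus
`a ≤ r ≤ c`, about the defect-free state, at the radial perturbation `η` with derivative `η'`. -/
noncomputable def radialSecondVariation (η η' : ℝ → ℝ) (δ a c : ℝ) : ℝ :=
  2 * π * ∫ r in a..c, (η' r ^ 2 - δ * (η r / r + η' r) ^ 2) * r

theorem continuousOn_div_id (ha : 0 < a) (hη : ContinuousOn η (Icc a c)) :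
    ContinuousOn (fun r => η r / r) (Icc a c) :=
  hη.div continuousOn_id fun _ hr => (ha.trans_le hr.1).ne'

theorem radialDirichletEnergy_nonneg (ha : 0 ≤ a) (hac : a ≤ c) :
    0 ≤ radialDirichletEnergy η' a c :=
  integral_nonneg hac fun _ hr => mul_nonneg (sq_nonneg _) (ha.trans hr.1)

theorem radialSecondVariation_eq (ha : 0 < a) (hac : a ≤ c)
    (hη : ContinuousOn η (Icc a c)) (hη' : ContinuousOn η' (Icc a c)) :
    radialSecondVariation η η' δ a c =
      2 * π * (radialDirichletEnergy η' a c - δ * radialSplayEnergy η η' a c) := by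
  have hquot := continuousOn_div_id ha hη
  have hDirichlet : IntervalIntegrable (fun r => η' r ^ 2 * r) volume a c :=
    ContinuousOn.intervalIntegrable_of_Icc hac (by fun_prop)
  have hSplay : IntervalIntegrable (fun r => (η r / r + η' r) ^ 2 * r) volume a c :=
    ContinuousOn.intervalIntegrable_of_Icc hac (by fun_prop)
  simp only [radialSecondVariation, radialDirichletEnergy, radialSplayEnergy, sub_mul, mul_assoc]
  rw [integral_sub hDirichlet (hSplay.const_mul δ), integral_const_mul]

theorem integral_two_mul_mul_deriv_eq_sq_sub_sq
    (hderiv : ∀ r ∈ uIcc a c, HasDerivWithinAt η (η' r) (uIcc a c) r)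
    (hη' : IntervalIntegrable η' volume a c) :
    ∫ r in a..c, 2 * η r * η' r = η c ^ 2 - η a ^ 2 := by
  calc ∫ r in a..c, 2 * η r * η' r
      = ∫ r in a..c, η' r * η r + η r * η' r := by congr with r; ring
    _ = η c * η c - η a * η a :=
      integral_deriv_mul_eq_sub_of_hasDerivWithinAt hderiv hderiv hη' hη'
    _ = η c ^ 2 - η a ^ 2 := by ring

theorem radialSplayEnergy_eq (ha : 0 < a) (hac : a ≤ c)
    (hderiv : ∀ r ∈ Icc a c, HasDerivWithinAt η (η' r) (Icc a c) r)
    (hη' : ContinuousOn η' (Icc a c)) :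
    radialSplayEnergy η η' a c =
      radialDirichletEnergy η' a c + (∫ r in a..c, η r ^ 2 / r) + (η c ^ 2 - η a ^ 2) := by
  have hη : ContinuousOn η (Icc a c) := HasDerivWithinAt.continuousOn hderiv
  have hDirichlet : IntervalIntegrable (fun r => η' r ^ 2 * r) volume a c :=
    ContinuousOn.intervalIntegrable_of_Icc hac (by fun_prop)
  have hquot : IntervalIntegrable (fun r => η r ^ 2 / r) volume a c :=
    (continuousOn_div_id ha (hη.pow 2)).intervalIntegrable_of_Icc hac
  have hcross : IntervalIntegrable (fun r => 2 * η r * η' r) volume a c :=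
    ContinuousOn.intervalIntegrable_of_Icc hac (by fun_prop)
  have expand : ∀ r ∈ uIcc a c, (η r / r + η' r) ^ 2 * r =
      η' r ^ 2 * r + η r ^ 2 / r + 2 * η r * η' r := by
    intro r hr
    have hr0 : r ≠ 0 := (ha.trans_le (uIcc_of_le hac ▸ hr).1).ne'
    field_simp
    ring
  rw [radialSplayEnergy, radialDirichletEnergy, integral_congr expand,
    integral_add (hDirichlet.add hquot) hcross, integral_add hDirichlet hquot,
    integral_two_mul_mul_deriv_eq_sq_sub_sq (by rwa [uIcc_of_le hac])
      (hη'.intervalIntegrable_of_Icc hac)]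

theorem integral_sq_div_pos (ha : 0 < a) (hac : a < c) (hη : ContinuousOn η (Icc a c))
    (hne : ∃ r ∈ Icc a c, η r ≠ 0) : 0 < ∫ r in a..c, η r ^ 2 / r := by
  obtain ⟨r, hr, hηr⟩ := hne
  exact integral_pos hac (continuousOn_div_id ha (hη.pow 2))
    (fun s hs => div_nonneg (sq_nonneg _) (ha.trans hs.1).le)
    ⟨r, hr, div_pos (sq_pos_of_ne_zero hηr) (ha.trans_le hr.1)⟩

theorem radialDirichletEnergy_lt_radialSplayEnergy (ha : 0 < a) (hac : a < c)
    (hderiv : ∀ r ∈ Icc a c, HasDerivWithinAt η (η' r) (Icc a c) r)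
    (hη' : ContinuousOn η' (Icc a c)) (hbdry : |η a| ≤ |η c|)
    (hne : ∃ r ∈ Icc a c, η r ≠ 0) :
    radialDirichletEnergy η' a c < radialSplayEnergy η η' a c := by
  have hpos := integral_sq_div_pos ha hac (HasDerivWithinAt.continuousOn hderiv) hne
  have hsq : η a ^ 2 ≤ η c ^ 2 := sq_le_sq.2 hbdry
  rw [radialSplayEnergy_eq ha hac.le hderiv hη']
  linarith

theorem radialSecondVariation_neg_iff (ha : 0 < a) (hac : a ≤ c)
    (hη : ContinuousOn η (Icc a c)) (hη' : ContinuousOn η' (Icc a c))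
    (hsplay : 0 < radialSplayEnergy η η' a c) :
    radialSecondVariation η η' δ a c < 0 ↔
      radialDirichletEnergy η' a c / radialSplayEnergy η η' a c < δ := by
  rw [radialSecondVariation_eq ha hac hη hη', ← smul_eq_mul (2 * π),
    smul_neg_iff_of_pos_left two_pi_pos, sub_neg, div_lt_iff₀ hsplay]

theorem stmt_0_general (ha : 0 < a) (hac : a < c)
    (hderiv : ∀ r ∈ Icc a c, HasDerivWithinAt η (η' r) (Icc a c) r)
    (hη' : ContinuousOn η' (Icc a c)) (hbdry : |η a| ≤ |η c|)
    (hne : ∃ r ∈ Icc a c, η r ≠ 0) :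
    ∃ δη ∈ Ico (0 : ℝ) 1, ∀ δ, radialSecondVariation η η' δ a c < 0 ↔ δη < δ := by
  have hDirichlet := radialDirichletEnergy_nonneg (η' := η') ha.le hac.le
  have hlt := radialDirichletEnergy_lt_radialSplayEnergy ha hac hderiv hη' hbdry hne
  have hsplay := hDirichlet.trans_lt hlt
  exact ⟨radialDirichletEnergy η' a c / radialSplayEnergy η η' a c,
    ⟨div_nonneg hDirichlet hsplay.le, (div_lt_one hsplay).2 hlt⟩, fun _ =>
    radialSecondVariation_neg_iff ha hac.le (HasDerivWithinAt.continuousOn hderiv) hη' hsplay⟩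

end

/-- For `0 < b < 1` and a continuously differentiable `η : [b,1] → ℝ`,
not identically zero, with `η b = η 1 = 0`, there exists `δ_η < 1` such that for every
`δ` with `δ_η < δ ≤ 1` the second variation
`E₂(η,δ,b) = 2π ∫_b^1 [(η')² − δ (η/r + η')²] r dr` is strictly negative. -/
theorem stmt_0 (b : ℝ) (hb0 : 0 < b) (hb1 : b < 1)
    (η η' : ℝ → ℝ)
    (hderiv : ∀ r ∈ Icc b 1, HasDerivAt η (η' r) r)
    (hcont : ContinuousOn η' (Icc b 1))
    (hηb : η b = 0) (hη1 : η 1 = 0)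
    (hne : ∃ r ∈ Icc b 1, η r ≠ 0) :
    ∃ δη : ℝ, δη < 1 ∧ ∀ δ : ℝ, δη < δ → δ ≤ 1 →
      2 * π * ∫ r in b..1, ((η' r) ^ 2 - δ * (η r / r + η' r) ^ 2) * r < 0 := by
  obtain ⟨δη, hδη, hneg⟩ := stmt_0_general hb0 hb1
    (fun r hr => (hderiv r hr).hasDerivWithinAt) hcont (by rw [hηb, hη1]) hne
  exact ⟨δη, hδη.2, fun δ hδ _ => (hneg δ).2 hδ⟩
end

section
/- Let 0<b<1 and let A, δ₁, δ₂ be real numbers. Define R(r) = [((log b)² + π²) A (δ₁A² − 2δ₂) / (2 r² (log b)²)] · sin(π log r/log b) − [δ₁ A³ (3π² + (log b)²) / (6 r² (log b)²)] · sin(3π log r/log b). Then ∫_b^1 sin(π log r/log b) · R(r) · r dr = ((log b)² + π²) · A(δ₁A² − 2δ₂) / (4 log(1/b)). In particular, this integral vanishes if and only if A(A²δ₁ − 2δ₂) = 0. -/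
open Real Set

/-!
With `u = π log r / log b`, the factor `r` cancels the `1 / r²` in `R` down to `dr / r`, which is
`(log b / π) du`, so up to the factor `log (1 / b) / π` the integral becomes that of
`sin u (c sin u - d sin 3u)` over `[0, π]` for constants `c` and `d`. By orthogonality of the sines
the third harmonic drops out and only `c π / 2` survives.
-/

section Substitution

variable {E : Type*} [NormedAddCommGroup E] [NormedSpace ℝ E]

lemma integral_comp_log (g : ℝ → E) {a b : ℝ} (ha : 0 < a) (hb : 0 < b) :
    ∫ r in a..b, r⁻¹ • g (log r) = ∫ t in log a..log b, g t := by
  have min_pos : 0 < min a b := lt_min ha hb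
  have log_continuousOn : ContinuousOn log (uIcc a b) :=
    continuousOn_log.mono fun r hr => (min_pos.trans_le hr.1).ne'
  exact intervalIntegral.integral_deriv_smul_comp_of_deriv_nonneg log_continuousOn
    (fun r hr => hasDerivAt_log (min_pos.trans hr.1).ne')
    (fun r hr => inv_nonneg.2 (min_pos.trans hr.1).le)

lemma integral_comp_pi_mul_log_div_log (g : ℝ → E) {b : ℝ} (hb0 : 0 < b) (hb1 : b ≠ 1) :
    ∫ r in b..1, r⁻¹ • g (π * log r / log b) = (log (1 / b) / π) • ∫ u in 0..π, g u := by
  have hL : log b ≠ 0 := log_ne_zero_of_pos_of_ne_one hb0 hb1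
  have hscale : π / log b ≠ 0 := div_ne_zero pi_ne_zero hL
  calc ∫ r in b..1, r⁻¹ • g (π * log r / log b)
      = ∫ t in log b..0, g (π / log b * t) := by
        simpa only [mul_div_right_comm, log_one] using
          integral_comp_log (fun t => g (π / log b * t)) hb0 one_pos
    _ = (log b / π) • ∫ u in π..0, g u := by
        rw [intervalIntegral.integral_comp_mul_left _ hscale, div_mul_cancel₀ _ hL, mul_zero,
          inv_div]
    _ = (log (1 / b) / π) • ∫ u in 0..π, g u := by
        rw [intervalIntegral.integral_symm, smul_neg, ← neg_smul, one_div, log_inv, neg_div]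

end Substitution

lemma integral_cos_int_mul (n : ℤ) :
    ∫ u in 0..π, cos (n * u) = if n = 0 then π else 0 := by
  split_ifs with hn
  · simp [hn]
  · simp [Int.cast_ne_zero.2 hn, sin_int_mul_pi]

lemma integral_sin_nat_mul_mul_sin_nat_mul (m : ℕ) {n : ℕ} (hn : n ≠ 0) :
    ∫ u in 0..π, sin (m * u) * sin (n * u) = if m = n then π / 2 else 0 := by
  have product_to_sum (u : ℝ) : sin (m * u) * sin (n * u) =
      (cos ((m - n : ℤ) * u) - cos ((m + n : ℤ) * u)) / 2 := by
    push_cast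
    rw [sub_mul, add_mul, ← two_mul_sin_mul_sin]
    ring
  have hsum : (m + n : ℤ) ≠ 0 := by omega
  simp only [product_to_sum]
  rw [intervalIntegral.integral_div,
    intervalIntegral.integral_sub
      (Continuous.intervalIntegrable (by fun_prop) _ _)
      (Continuous.intervalIntegrable (by fun_prop) _ _),
    integral_cos_int_mul, integral_cos_int_mul, if_neg hsum, sub_zero, ite_div, zero_div]
  simp only [sub_eq_zero, Nat.cast_inj]

lemma integral_sin_nat_mul_mul_sub {m n : ℕ} (hm : m ≠ 0) (hmn : m ≠ n) (c d : ℝ) :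
    ∫ u in 0..π, sin (m * u) * (c * sin (m * u) - d * sin (n * u)) = c * (π / 2) := by
  have expand (u : ℝ) : sin (m * u) * (c * sin (m * u) - d * sin (n * u)) =
      c * (sin (m * u) * sin (m * u)) - d * (sin (n * u) * sin (m * u)) := by
    ring
  simp only [expand]
  rw [intervalIntegral.integral_sub
      (Continuous.intervalIntegrable (by fun_prop) _ _)
      (Continuous.intervalIntegrable (by fun_prop) _ _),
    intervalIntegral.integral_const_mul, intervalIntegral.integral_const_mul,
    integral_sin_nat_mul_mul_sin_nat_mul m hm, integral_sin_nat_mul_mul_sin_nat_mul n hm,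
    if_pos rfl, if_neg hmn.symm, mul_zero, sub_zero]

lemma integral_sin_nat_mul_log_mul_sub {b : ℝ} (hb0 : 0 < b) (hb1 : b ≠ 1) {m n : ℕ}
    (hm : m ≠ 0) (hmn : m ≠ n) (c d : ℝ) :
    ∫ r in b..1, r⁻¹ * (sin (m * (π * log r / log b)) *
      (c * sin (m * (π * log r / log b)) - d * sin (n * (π * log r / log b)))) =
      c * log (1 / b) / 2 := by
  have substitution := integral_comp_pi_mul_log_div_log
    (fun u => sin (m * u) * (c * sin (m * u) - d * sin (n * u))) hb0 hb1
  simp only [smul_eq_mul] at substitution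
  rw [substitution, integral_sin_nat_mul_mul_sub hm hmn]
  field_simp

theorem stmt_5_general (b : ℝ) (hb0 : 0 < b) (hb1 : b ≠ 1) (A δ₁ δ₂ : ℝ) (R : ℝ → ℝ)
    (hR : R = fun r =>
      (log b ^ 2 + π ^ 2) * A * (δ₁ * A ^ 2 - 2 * δ₂) / (2 * r ^ 2 * log b ^ 2) *
          sin (π * log r / log b)
        - δ₁ * A ^ 3 * (3 * π ^ 2 + log b ^ 2) / (6 * r ^ 2 * log b ^ 2) *
          sin (3 * π * log r / log b)) :
    (∫ r in b..1, sin (π * log r / log b) * R r * r) =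
      (log b ^ 2 + π ^ 2) * (A * (δ₁ * A ^ 2 - 2 * δ₂)) / (4 * log (1 / b)) ∧
    ((∫ r in b..1, sin (π * log r / log b) * R r * r) = 0 ↔
      A * (A ^ 2 * δ₁ - 2 * δ₂) = 0) := by
  have hL : log b ≠ 0 := log_ne_zero_of_pos_of_ne_one hb0 hb1
  have hlog : log (1 / b) = -log b := by rw [one_div, log_inv]
  set c := (log b ^ 2 + π ^ 2) * A * (δ₁ * A ^ 2 - 2 * δ₂) / (2 * log b ^ 2) with hc
  set d := δ₁ * A ^ 3 * (3 * π ^ 2 + log b ^ 2) / (6 * log b ^ 2) with hd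
  have integrand_eq (r : ℝ) : sin (π * log r / log b) * R r * r =
      r⁻¹ * (sin (π * log r / log b) *
        (c * sin (π * log r / log b) - d * sin (3 * (π * log r / log b)))) := by
    have third_mode : 3 * π * log r / log b = 3 * (π * log r / log b) := by ring
    rcases eq_or_ne r 0 with rfl | hr
    · simp
    · simp only [hR, hc, hd, third_mode]
      field_simp
  have projection : ∫ r in b..1, sin (π * log r / log b) * R r * r = c * log (1 / b) / 2 := by
    simpa [integrand_eq] using
      integral_sin_nat_mul_log_mul_sub hb0 hb1 one_ne_zero (by decide : 1 ≠ 3) c d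
  have value : ∫ r in b..1, sin (π * log r / log b) * R r * r =
      (log b ^ 2 + π ^ 2) * (A * (δ₁ * A ^ 2 - 2 * δ₂)) / (4 * log (1 / b)) := by
    rw [projection, hc, hlog]
    field_simp
    ring
  refine ⟨value, ?_⟩
  have hsq : log b ^ 2 + π ^ 2 ≠ 0 := by positivity
  have hden : 4 * log (1 / b) ≠ 0 := mul_ne_zero four_ne_zero (hlog ▸ neg_ne_zero.2 hL)
  rw [value, div_eq_zero_iff, or_iff_left hden, mul_eq_zero, or_iff_right hsq, mul_comm δ₁]

/-- For `0 < b < 1` and reals `A, δ₁, δ₂`, with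
`R r = [((log b)² + π²) A (δ₁A² − 2δ₂)/(2 r² (log b)²)] sin(π log r/log b)
      − [δ₁ A³ (3π² + (log b)²)/(6 r² (log b)²)] sin(3π log r/log b)`,
one has `∫_b^1 sin(π log r/log b) R(r) r dr = ((log b)² + π²) A(δ₁A² − 2δ₂)/(4 log(1/b))`,
which vanishes iff `A(A²δ₁ − 2δ₂) = 0`. -/
theorem stmt_5 (b : ℝ) (hb0 : 0 < b) (hb1 : b < 1) (A δ₁ δ₂ : ℝ)
    (R : ℝ → ℝ)
    (hR : R = fun r =>
      ((Real.log b) ^ 2 + π ^ 2) * A * (δ₁ * A ^ 2 - 2 * δ₂) /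
          (2 * r ^ 2 * (Real.log b) ^ 2) * Real.sin (π * Real.log r / Real.log b)
        - δ₁ * A ^ 3 * (3 * π ^ 2 + (Real.log b) ^ 2) /
          (6 * r ^ 2 * (Real.log b) ^ 2) * Real.sin (3 * π * Real.log r / Real.log b)) :
    (∫ r in b..1, Real.sin (π * Real.log r / Real.log b) * R r * r)
      = ((Real.log b) ^ 2 + π ^ 2) * (A * (δ₁ * A ^ 2 - 2 * δ₂)) / (4 * Real.log (1 / b)) ∧
    ((∫ r in b..1, Real.sin (π * Real.log r / Real.log b) * R r * r) = 0
      ↔ A * (A ^ 2 * δ₁ - 2 * δ₂) = 0) :=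
  stmt_5_general b hb0 hb1.ne A δ₁ δ₂ R hR
end

section
/- Let 0<b<1 and define g(t) = (b e^t + e^{−t})/(1+b). Then 0 < g(t) < 1 for all t ∈ (0, log(1/b)), the function U(t) = arccos(g(t)) is twice continuously differentiable on the open interval (0, log(1/b)) and satisfies (cos²U(t) − 1) U''(t) − (1/2) sin(2U(t)) ( (U'(t))² + 1 ) = 0 there, and U extends continuously to [0, log(1/b)] with U(0) = U(log(1/b)) = 0. -/
open Real Set

/-!
The function `g` solves `g'' = g` with `g = 1` at both ends, and
`1 - g = (e^t - 1) (1 - b e^t) e^{-t} / (1 + b)` is positive in between, so `arccos` is smooth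
along `g` there. In terms of `cos U`, the left-hand side of the equation at `δ = 1` is
`sin U * ((cos U)'' - cos U)`, so it vanishes for `U = arccos g`.
-/

open scoped ContDiff Topology

/-- The left-hand side `(δ cos² U - 1) U'' - (δ / 2) sin (2U) (U'² + 1)` of the Euler–Lagrange
equation for Oseen–Frank spirals with elastic anisotropy `δ`, as a function of `t = -log r`. -/
noncomputable def spiralEulerLagrange (δ : ℝ) (U : ℝ → ℝ) (t : ℝ) : ℝ :=
  (δ * cos (U t) ^ 2 - 1) * deriv (deriv U) t - δ / 2 * sin (2 * U t) * (deriv U t ^ 2 + 1)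

theorem deriv_deriv_cos_comp {U : ℝ → ℝ} {t : ℝ} (hU : ∀ᶠ s in 𝓝 t, DifferentiableAt ℝ U s)
    (hU' : DifferentiableAt ℝ (deriv U) t) :
    deriv (deriv fun s => cos (U s)) t =
      -cos (U t) * deriv U t ^ 2 - sin (U t) * deriv (deriv U) t := by
  have deriv_cos_eventuallyEq :
      deriv (fun s => cos (U s)) =ᶠ[𝓝 t] fun s => -sin (U s) * deriv U s :=
    hU.mono fun _ hs => deriv_cos hs
  have hasDerivAt_neg_sin_mul_deriv :=
    hU.self_of_nhds.hasDerivAt.sin.fun_neg.fun_mul hU'.hasDerivAt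
  rw [deriv_cos_eventuallyEq.deriv_eq, hasDerivAt_neg_sin_mul_deriv.deriv]
  ring

theorem spiralEulerLagrange_eq_deriv_deriv_cos (δ : ℝ) {U : ℝ → ℝ} {t : ℝ}
    (hU : ∀ᶠ s in 𝓝 t, DifferentiableAt ℝ U s) (hU' : DifferentiableAt ℝ (deriv U) t) :
    spiralEulerLagrange δ U t =
      δ * sin (U t) * (deriv (deriv fun s => cos (U s)) t - cos (U t)) +
        (δ - 1) * deriv (deriv U) t := by
  rw [spiralEulerLagrange, deriv_deriv_cos_comp hU hU', sin_two_mul, cos_sq']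
  ring

theorem contDiffAt_arccos_comp {f : ℝ → ℝ} {t : ℝ} {n : ℕ∞ω} (hf : ContDiffAt ℝ n f t)
    (h₁ : f t ≠ -1) (h₂ : f t ≠ 1) : ContDiffAt ℝ n (fun s => arccos (f s)) t :=
  (contDiffAt_arccos h₁ h₂).comp t hf

theorem spiralEulerLagrange_one_arccos_eq_zero {f : ℝ → ℝ} {t : ℝ} (hf : ContDiffAt ℝ 2 f t)
    (hgt : -1 < f t) (hlt : f t < 1) (hode : deriv (deriv f) t = f t) :
    spiralEulerLagrange 1 (fun s => arccos (f s)) t = 0 := by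
  have hU : ContDiffAt ℝ 2 (fun s => arccos (f s)) t := contDiffAt_arccos_comp hf hgt.ne' hlt.ne
  have differentiableAt_near : ∀ᶠ s in 𝓝 t, DifferentiableAt ℝ (fun s => arccos (f s)) s :=
    (hU.eventually (by simp)).mono fun _ hs => hs.differentiableAt two_ne_zero
  have differentiableAt_deriv : DifferentiableAt ℝ (deriv fun s => arccos (f s)) t :=
    (hU.derivWithin (m := 1) one_add_one_eq_two.le).differentiableAt one_ne_zero
  have cos_arccos_near : (fun s => cos (arccos (f s))) =ᶠ[𝓝 t] f := by
    filter_upwards [hf.continuousAt.eventually_mem (Ioo_mem_nhds hgt hlt)] with s hs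
    exact cos_arccos hs.1.le hs.2.le
  rw [spiralEulerLagrange_eq_deriv_deriv_cos 1 differentiableAt_near differentiableAt_deriv,
    cos_arccos_near.deriv.deriv_eq, cos_arccos hgt.le hlt.le, hode]
  ring

/-- The cosine `(b e^t + e^{-t}) / (1 + b)` of the exact spiral at `δ = 1`, normalized to take the
value `1` on the boundary circles `t = 0` and `t = log (1 / b)`. -/
noncomputable def spiralCos (b t : ℝ) : ℝ :=
  (b * exp t + exp (-t)) / (1 + b)

theorem contDiff_spiralCos (b : ℝ) {n : ℕ∞ω} : ContDiff ℝ n (spiralCos b) := by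
  unfold spiralCos
  fun_prop

theorem hasDerivAt_exp_neg (t : ℝ) : HasDerivAt (fun s => exp (-s)) (-exp (-t)) t := by
  simpa only [mul_neg, mul_one] using (hasDerivAt_neg t).exp

theorem hasDerivAt_spiralCos (b t : ℝ) :
    HasDerivAt (spiralCos b) ((b * exp t - exp (-t)) / (1 + b)) t :=
  (((Real.hasDerivAt_exp t).const_mul b).add (hasDerivAt_exp_neg t)).div_const (1 + b)

theorem deriv_deriv_spiralCos (b t : ℝ) : deriv (deriv (spiralCos b)) t = spiralCos b t := by
  rw [funext fun s => (hasDerivAt_spiralCos b s).deriv]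
  have hasDerivAt_deriv :=
    (((Real.hasDerivAt_exp t).const_mul b).fun_sub (hasDerivAt_exp_neg t)).div_const (1 + b)
  rw [hasDerivAt_deriv.deriv, sub_neg_eq_add, spiralCos]

theorem one_sub_spiralCos {b : ℝ} (hb : 1 + b ≠ 0) (t : ℝ) :
    1 - spiralCos b t = (exp t - 1) * (1 - b * exp t) * exp (-t) / (1 + b) := by
  rw [spiralCos, exp_neg]
  field_simp
  ring

theorem spiralCos_pos {b : ℝ} (hb : 0 ≤ b) (t : ℝ) : 0 < spiralCos b t := by
  unfold spiralCos
  positivity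

theorem spiralCos_lt_one {b t : ℝ} (hb : -1 < b) (ht : 0 < t) (hbt : b * exp t < 1) :
    spiralCos b t < 1 := by
  have one_add_pos : 0 < 1 + b := by linarith
  rw [← sub_pos, one_sub_spiralCos one_add_pos.ne']
  have factors_pos : 0 < (exp t - 1) * (1 - b * exp t) :=
    mul_pos (sub_pos.2 (one_lt_exp_iff.2 ht)) (sub_pos.2 hbt)
  positivity

theorem spiralCos_zero {b : ℝ} (hb : 1 + b ≠ 0) : spiralCos b 0 = 1 := by
  simp [spiralCos, add_comm b, hb]

theorem spiralCos_log_one_div {b : ℝ} (hb : 0 < b) : spiralCos b (log (1 / b)) = 1 := by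
  simp [spiralCos, exp_neg, exp_log hb, hb.ne', (by positivity : 1 + b ≠ 0)]

/-- For `0 < b < 1` and `g t = (b e^t + e^{−t})/(1+b)`:
`0 < g < 1` on `(0, log(1/b))`; `U = arccos ∘ g` is C² on `(0, log(1/b))` and satisfies
`(cos²U − 1) U'' − (1/2) sin(2U)((U')² + 1) = 0` there; and `U` is continuous on
`[0, log(1/b)]` with `U 0 = U (log(1/b)) = 0`. -/
theorem stmt_7 (b : ℝ) (hb0 : 0 < b) (hb1 : b < 1)
    (g U : ℝ → ℝ)
    (hg : g = fun t => (b * Real.exp t + Real.exp (-t)) / (1 + b))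
    (hU : U = fun t => Real.arccos (g t)) :
    (∀ t ∈ Ioo 0 (Real.log (1 / b)), 0 < g t ∧ g t < 1) ∧
    ContDiffOn ℝ 2 U (Ioo 0 (Real.log (1 / b))) ∧
    (∀ t ∈ Ioo 0 (Real.log (1 / b)),
      ((Real.cos (U t)) ^ 2 - 1) * deriv (deriv U) t
        - (1 / 2) * Real.sin (2 * U t) * ((deriv U t) ^ 2 + 1) = 0) ∧
    ContinuousOn U (Icc 0 (Real.log (1 / b))) ∧
    U 0 = 0 ∧ U (Real.log (1 / b)) = 0 := by
  obtain rfl : g = spiralCos b := hg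
  subst hU
  have hpos : ∀ t, 0 < spiralCos b t := spiralCos_pos hb0.le
  have hlt : ∀ t ∈ Ioo 0 (log (1 / b)), spiralCos b t < 1 := fun t ht =>
    spiralCos_lt_one (by linarith) ht.1
      ((lt_div_iff₀' hb0).1 ((lt_log_iff_exp_lt (by positivity)).1 ht.2))
  have hgt : ∀ t, -1 < spiralCos b t := fun t => neg_one_lt_zero.trans (hpos t)
  refine ⟨fun t ht => ⟨hpos t, hlt t ht⟩, fun t ht => ?_, fun t ht => ?_, ?_, ?_, ?_⟩
  · exact (contDiffAt_arccos_comp (contDiff_spiralCos b).contDiffAt (hgt t).ne'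
      (hlt t ht).ne).contDiffWithinAt
  · simpa only [spiralEulerLagrange, one_mul] using spiralEulerLagrange_one_arccos_eq_zero
      (contDiff_spiralCos b).contDiffAt (hgt t) (hlt t ht) (deriv_deriv_spiralCos b t)
  · exact (continuous_arccos.comp (contDiff_spiralCos b (n := 0)).continuous).continuousOn
  · simp only [spiralCos_zero (by positivity : 1 + b ≠ 0), arccos_one]
  · simp only [spiralCos_log_one_div hb0, arccos_one]
end

section
/- Let 0<b<1 and define g(t) = (b e^t + e^{−t})/(1+b). Then π ∫_0^{log(1/b)} ( g(t) − g'(t) )² dt = 2π (1 − b)/(1 + b). -/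
/-!
The growing mode `e^t` cancels in `h = g - g'`, so `h` is a multiple of `e^{-t}` and satisfies
`h' = -h`. Hence `h² = -(h²)' / 2`, and the integral is `(h(0)² - h(T)²) / 2` with
`T = log (1 / b)`, where `e^{-T} = b`.
-/

open Real Set

theorem integral_sq_of_hasDerivAt_const_mul_self {𝕜 : Type*} [RCLike 𝕜] {h : ℝ → 𝕜}
    {c : 𝕜} {x y : ℝ} (hc : c ≠ 0)
    (hh : ∀ t ∈ uIcc x y, HasDerivAt h (c * h t) t) :
    ∫ t in x..y, h t ^ 2 = (h y ^ 2 - h x ^ 2) / (2 * c) := by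
  have hprim : ∀ t ∈ uIcc x y, HasDerivAt (fun s => h s ^ 2 / (2 * c)) (h t ^ 2) t := by
    intro t ht
    refine (((hh t ht).fun_pow 2).div_const (2 * c)).congr_deriv ?_
    field_simp
    ring
  have hcont : ContinuousOn (fun t => h t ^ 2) (uIcc x y) :=
    (HasDerivAt.continuousOn hh).pow 2
  rw [intervalIntegral.integral_eq_sub_of_hasDerivAt hprim hcont.intervalIntegrable, sub_div]

theorem integral_mul_exp_neg_sq (a x y : ℝ) :
    ∫ t in x..y, (a * exp (-t)) ^ 2 = ((a * exp (-x)) ^ 2 - (a * exp (-y)) ^ 2) / 2 := by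
  have hdecay (t : ℝ) : HasDerivAt (fun s => a * exp (-s)) (-1 * (a * exp (-t))) t :=
    ((hasDerivAt_neg t).exp.const_mul a).congr_deriv (by ring)
  rw [integral_sq_of_hasDerivAt_const_mul_self (by norm_num) fun t _ => hdecay t]
  ring

theorem deriv_mul_exp_add_mul_exp_neg (p q t : ℝ) :
    deriv (fun s => p * exp s + q * exp (-s)) t = p * exp t - q * exp (-t) := by
  rw [(((hasDerivAt_exp t).const_mul p).fun_add ((hasDerivAt_neg t).exp.const_mul q)).deriv]
  ring

theorem mul_exp_add_mul_exp_neg_sub_deriv (p q t : ℝ) :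
    p * exp t + q * exp (-t) - deriv (fun s => p * exp s + q * exp (-s)) t =
      2 * q * exp (-t) := by
  rw [deriv_mul_exp_add_mul_exp_neg]
  ring

theorem stmt_8_general (b : ℝ) (hb : 0 < b)
    (g : ℝ → ℝ) (hg : g = fun t => (b * exp t + exp (-t)) / (1 + b)) :
    π * ∫ t in (0 : ℝ)..log (1 / b), (g t - deriv g t) ^ 2 = 2 * π * (1 - b) / (1 + b) := by
  have hmodes : g = fun t => b / (1 + b) * exp t + 1 / (1 + b) * exp (-t) := by
    rw [hg]
    ext t
    ring
  have hgap (t : ℝ) : g t - deriv g t = 2 * (1 / (1 + b)) * exp (-t) := by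
    rw [hmodes, mul_exp_add_mul_exp_neg_sub_deriv]
  have hend : exp (-log (1 / b)) = b := by
    rw [one_div, log_inv, neg_neg, exp_log hb]
  simp_rw [hgap]
  rw [integral_mul_exp_neg_sq, hend, neg_zero, exp_zero]
  field_simp
  ring

/-- For `0 < b < 1` and `g t = (b e^t + e^{−t})/(1+b)`,
`π ∫_0^{log(1/b)} (g − g')² dt = 2π(1−b)/(1+b)`. -/
theorem stmt_8 (b : ℝ) (hb0 : 0 < b) (hb1 : b < 1)
    (g : ℝ → ℝ) (hg : g = fun t => (b * Real.exp t + Real.exp (-t)) / (1 + b)) :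
    π * ∫ t in (0:ℝ)..Real.log (1 / b), (g t - deriv g t) ^ 2
      = 2 * π * (1 - b) / (1 + b) :=
  stmt_8_general b hb0 g hg
end

section
/- Let 0<b<1. For every t ∈ (0, log(1/b)) one has b² e^{2t} + e^{−2t} − b² − 1 < 0 and (2b − b² − 1)/(b² e^{2t} + e^{−2t} − b² − 1) ≥ 1. -/
open Real Set

/-!
With `u = e^{2t}` and `v = e^{-2t}`, so that `u * v = 1`, the denominator factors as
`(u - 1) * (b² - v)`, where `u > 1` and `v > b²`. It exceeds the numerator by the perfect square
`u * (b - v)² = (b e^t - e^{-t})²`, so the quotient of these negative numbers is at least `1`.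
-/

section MulEqOne

variable {R : Type*} [CommRing R] {u v : R}

theorem mul_add_sub_sub_one_eq_mul_of_mul_eq_one (huv : u * v = 1) (c : R) :
    c * u + v - c - 1 = (u - 1) * (c - v) := by
  linear_combination huv

theorem sq_mul_add_sub_two_mul_eq_of_mul_eq_one (huv : u * v = 1) (b : R) :
    b ^ 2 * u + v - 2 * b = u * (b - v) ^ 2 := by
  linear_combination (2 * b - v) * huv

variable [LinearOrder R] [IsStrictOrderedRing R]

theorem mul_add_sub_sub_one_neg_of_mul_eq_one {c : R} (huv : u * v = 1) (hu : 1 < u)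
    (hc : c < v) : c * u + v - c - 1 < 0 := by
  rw [mul_add_sub_sub_one_eq_mul_of_mul_eq_one huv]
  exact mul_neg_of_pos_of_neg (sub_pos.mpr hu) (sub_neg.mpr hc)

theorem two_mul_le_sq_mul_add_of_mul_eq_one (huv : u * v = 1) (hu : 0 ≤ u) (b : R) :
    2 * b ≤ b ^ 2 * u + v := by
  rw [← sub_nonneg, sq_mul_add_sub_two_mul_eq_of_mul_eq_one huv]
  exact mul_nonneg hu (sq_nonneg _)

end MulEqOne

theorem sq_lt_exp_neg_two_mul_of_lt_log_one_div {b t : ℝ} (hb : 0 < b) (ht : t < log (1 / b)) :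
    b ^ 2 < exp (-(2 * t)) := by
  rw [one_div, log_inv] at ht
  rw [← log_lt_iff_lt_exp (pow_pos hb 2), log_pow]
  push_cast
  linarith

/-- For `0 < b < 1` and every `t ∈ (0, log(1/b))`,
`b² e^{2t} + e^{−2t} − b² − 1 < 0` and
`(2b − b² − 1)/(b² e^{2t} + e^{−2t} − b² − 1) ≥ 1`. -/
theorem stmt_9 (b : ℝ) (hb0 : 0 < b) (hb1 : b < 1) :
    ∀ t ∈ Ioo 0 (Real.log (1 / b)),
      b ^ 2 * Real.exp (2 * t) + Real.exp (-(2 * t)) - b ^ 2 - 1 < 0 ∧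
      1 ≤ (2 * b - b ^ 2 - 1) /
        (b ^ 2 * Real.exp (2 * t) + Real.exp (-(2 * t)) - b ^ 2 - 1) := by
  rintro t ⟨ht0, htb⟩
  have huv : exp (2 * t) * exp (-(2 * t)) = 1 := by rw [← exp_add, add_neg_cancel, exp_zero]
  have hu : 1 < exp (2 * t) := one_lt_exp_iff.mpr (mul_pos two_pos ht0)
  have hden : b ^ 2 * exp (2 * t) + exp (-(2 * t)) - b ^ 2 - 1 < 0 :=
    mul_add_sub_sub_one_neg_of_mul_eq_one huv hu (sq_lt_exp_neg_two_mul_of_lt_log_one_div hb0 htb)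
  refine ⟨hden, (one_le_div_of_neg hden).mpr ?_⟩
  gcongr
  exact two_mul_le_sq_mul_add_of_mul_eq_one huv (exp_nonneg _) b
end

section
/- Let 0<b<1, 0<δ<1, α>0 with α ≠ δ, and set μ = √(δ/(1−δ)). Define f(r) = sin(μ log(1/r)) + (√(δ(1−δ))/(α−δ)) cos(μ log(1/r)) for r ∈ [b,1]. Then: (i) r f'(r) + r² f''(r) + (δ/(1−δ)) f(r) = 0 on [b,1]; (ii) f'(1) = ((δ−α)/(1−δ)) f(1); and (iii) the boundary condition f'(b) = ((α + δ/b)/(1−δ)) f(b) holds if and only if (αδ − αbδ + α²b − δ) sin(μ log(1/b)) + α(1+b)√(δ(1−δ)) cos(μ log(1/b)) = 0. -/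
open Real Set

/-!
In the variable `t = log (1 / r)` the Euler operator `r f' + r² f''` becomes `d²/dt²`, and `f`
becomes a harmonic oscillation of frequency `μ`; this gives the equation. A Robin condition
`f' = κ f` at `r` says that another oscillation of the same frequency, with coefficients affine
in `κ`, vanishes at `log (1 / r)`. With `s = √(δ (1 - δ))` the frequency is `s / (1 - δ)`, so at
`r = b` those coefficients, multiplied by `(1 - δ) (α - δ)`, are polynomials in `α`, `b`, `δ`
and `s`: the ones in the compatibility equation.
-/

section LogarithmicVariable

open Filter Topology

variable {E : Type*} [NormedAddCommGroup E] [NormedSpace ℝ E] {g : ℝ → E} {r : ℝ}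

lemma hasDerivAt_log_one_div (hr : r ≠ 0) : HasDerivAt (fun x => log (1 / x)) (-r⁻¹) r := by
  simpa only [one_div, log_inv] using (hasDerivAt_log hr).fun_neg

lemma deriv_comp_log_one_div (hr : r ≠ 0) (hg : DifferentiableAt ℝ g (log (1 / r))) :
    deriv (fun x => g (log (1 / x))) r = -r⁻¹ • deriv g (log (1 / r)) :=
  (hg.hasDerivAt.scomp r (hasDerivAt_log_one_div hr)).deriv

lemma smul_deriv_add_sq_smul_deriv_deriv_comp_log_one_div (hr : r ≠ 0)
    (hg : ∀ᶠ t in 𝓝 (log (1 / r)), DifferentiableAt ℝ g t)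
    (hg' : DifferentiableAt ℝ (deriv g) (log (1 / r))) :
    r • deriv (fun x => g (log (1 / x))) r + r ^ 2 • deriv (deriv fun x => g (log (1 / x))) r =
      deriv (deriv g) (log (1 / r)) := by
  have hlog := hasDerivAt_log_one_div hr
  have deriv_eq : deriv (fun x => g (log (1 / x))) =ᶠ[𝓝 r]
      fun x => -x⁻¹ • deriv g (log (1 / x)) := by
    filter_upwards [hlog.continuousAt.eventually hg, eventually_ne_nhds hr] with x hgx hx
    exact deriv_comp_log_one_div hx hgx
  have hasDerivAt_deriv :=
    (hasDerivAt_inv hr).fun_neg.fun_smul (hg'.hasDerivAt.scomp r hlog)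
  rw [deriv_eq.eq_of_nhds, (hasDerivAt_deriv.congr_of_eventuallyEq deriv_eq).deriv]
  simp only [Function.comp_apply]
  match_scalars <;> field_simp
  ring

end LogarithmicVariable

section HarmonicOscillation

/-- The oscillation `t ↦ A sin (m t) + B cos (m t)` of frequency `m`. Evaluated at
`t = log (1 / r)`, it is the general solution of the Euler equation `r f' + r² f'' + m² f = 0`
on `r > 0` when `m ≠ 0`. -/
noncomputable def harmonicOscillation (m A B t : ℝ) : ℝ :=
  A * sin (m * t) + B * cos (m * t)

variable (m A B : ℝ)

lemma harmonicOscillation_zero : harmonicOscillation m A B 0 = B := by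
  simp [harmonicOscillation]

lemma mul_harmonicOscillation (k t : ℝ) :
    k * harmonicOscillation m A B t = harmonicOscillation m (k * A) (k * B) t := by
  unfold harmonicOscillation
  ring

lemma hasDerivAt_harmonicOscillation (t : ℝ) :
    HasDerivAt (harmonicOscillation m A B) (harmonicOscillation m (-(m * B)) (m * A) t) t := by
  have hmul := hasDerivAt_const_mul (x := t) m
  refine ((hmul.sin.const_mul A).add (hmul.cos.const_mul B)).congr_deriv ?_
  unfold harmonicOscillation
  ring

lemma deriv_harmonicOscillation :
    deriv (harmonicOscillation m A B) = harmonicOscillation m (-(m * B)) (m * A) :=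
  funext fun t => (hasDerivAt_harmonicOscillation m A B t).deriv

lemma differentiable_harmonicOscillation : Differentiable ℝ (harmonicOscillation m A B) :=
  fun t => (hasDerivAt_harmonicOscillation m A B t).differentiableAt

lemma deriv_deriv_harmonicOscillation (t : ℝ) :
    deriv (deriv (harmonicOscillation m A B)) t = -m ^ 2 * harmonicOscillation m A B t := by
  rw [deriv_harmonicOscillation, deriv_harmonicOscillation, mul_harmonicOscillation]
  ring_nf

variable {r : ℝ}

lemma harmonicOscillation_log_one_div_euler_equation (hr : r ≠ 0) :
    r * deriv (fun x => harmonicOscillation m A B (log (1 / x))) r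
      + r ^ 2 * deriv (deriv fun x => harmonicOscillation m A B (log (1 / x))) r
      + m ^ 2 * harmonicOscillation m A B (log (1 / r)) = 0 := by
  have hdiff := differentiable_harmonicOscillation m A B
  have hdiff' : Differentiable ℝ (deriv (harmonicOscillation m A B)) := by
    rw [deriv_harmonicOscillation]
    exact differentiable_harmonicOscillation _ _ _
  have euler := smul_deriv_add_sq_smul_deriv_deriv_comp_log_one_div hr (.of_forall hdiff) (hdiff' _)
  simp only [smul_eq_mul] at euler
  rw [euler, deriv_deriv_harmonicOscillation]
  ring

lemma harmonicOscillation_log_one_div_robin_iff (hr : r ≠ 0) (κ : ℝ) :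
    deriv (fun x => harmonicOscillation m A B (log (1 / x))) r
        = κ * harmonicOscillation m A B (log (1 / r)) ↔
      harmonicOscillation m (r * κ * A - m * B) (r * κ * B + m * A) (log (1 / r)) = 0 := by
  have robin_defect : harmonicOscillation m (r * κ * A - m * B) (r * κ * B + m * A) (log (1 / r))
      = r * (κ * harmonicOscillation m A B (log (1 / r))
        - deriv (fun x => harmonicOscillation m A B (log (1 / x))) r) := by
    rw [deriv_comp_log_one_div hr (differentiable_harmonicOscillation m A B _),
      deriv_harmonicOscillation, smul_eq_mul]
    unfold harmonicOscillation
    field_simp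
    ring
  rw [robin_defect, mul_eq_zero_iff_left hr, sub_eq_zero, eq_comm]

end HarmonicOscillation

lemma sqrt_div_eq_sqrt_mul_div (x : ℝ) {y : ℝ} (hy : 0 ≤ y) : √(x / y) = √(x * y) / y := by
  rw [sqrt_div' x hy, sqrt_mul' x hy, mul_div_assoc, sqrt_div_self', mul_one_div]

section WeakAnchoring

variable {α δ s : ℝ}

lemma outer_robin_of_weak_anchoring (hδ : δ ≠ 1) (hαδ : α ≠ δ) :
    deriv (fun r => harmonicOscillation (s / (1 - δ)) 1 (s / (α - δ)) (log (1 / r))) 1 =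
      (δ - α) / (1 - δ) * harmonicOscillation (s / (1 - δ)) 1 (s / (α - δ)) (log (1 / 1)) := by
  have h1δ : 1 - δ ≠ 0 := sub_ne_zero.mpr hδ.symm
  have hαδ' : α - δ ≠ 0 := sub_ne_zero.mpr hαδ
  rw [harmonicOscillation_log_one_div_robin_iff _ _ _ one_ne_zero, div_one, log_one,
    harmonicOscillation_zero]
  field_simp
  ring

lemma inner_robin_iff_of_weak_anchoring (hδ : δ ≠ 1) (hαδ : α ≠ δ) (hs : s ^ 2 = δ * (1 - δ))
    {b : ℝ} (hb : b ≠ 0) :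
    deriv (fun r => harmonicOscillation (s / (1 - δ)) 1 (s / (α - δ)) (log (1 / r))) b =
        (α + δ / b) / (1 - δ)
          * harmonicOscillation (s / (1 - δ)) 1 (s / (α - δ)) (log (1 / b)) ↔
      harmonicOscillation (s / (1 - δ)) (α * δ - α * b * δ + α ^ 2 * b - δ) (α * (1 + b) * s)
        (log (1 / b)) = 0 := by
  have h1δ : 1 - δ ≠ 0 := sub_ne_zero.mpr hδ.symm
  have hαδ' : α - δ ≠ 0 := sub_ne_zero.mpr hαδ
  have sin_coeff : (1 - δ) * (α - δ) *
      (b * ((α + δ / b) / (1 - δ)) * 1 - s / (1 - δ) * (s / (α - δ)))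
      = α * δ - α * b * δ + α ^ 2 * b - δ := by
    field_simp
    linear_combination -hs
  have cos_coeff : (1 - δ) * (α - δ) *
      (b * ((α + δ / b) / (1 - δ)) * (s / (α - δ)) + s / (1 - δ) * 1) = α * (1 + b) * s := by
    field_simp
    ring
  rw [harmonicOscillation_log_one_div_robin_iff _ _ _ hb, ← sin_coeff, ← cos_coeff,
    ← mul_harmonicOscillation, mul_eq_zero_iff_left (mul_ne_zero h1δ hαδ')]

end WeakAnchoring

theorem stmt_11_general (δ α : ℝ) (hδ0 : 0 < δ) (hδ1 : δ < 1) (hαδ : α ≠ δ)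
    (μ : ℝ) (hμ : μ = √(δ / (1 - δ))) (f : ℝ → ℝ)
    (hf : f = fun r => sin (μ * log (1 / r)) + √(δ * (1 - δ)) / (α - δ) * cos (μ * log (1 / r))) :
    (∀ r, 0 < r → r * deriv f r + r ^ 2 * deriv (deriv f) r + (δ / (1 - δ)) * f r = 0) ∧
    deriv f 1 = ((δ - α) / (1 - δ)) * f 1 ∧
    ∀ b, 0 < b → (deriv f b = ((α + δ / b) / (1 - δ)) * f b ↔
      (α * δ - α * b * δ + α ^ 2 * b - δ) * sin (μ * log (1 / b))
        + α * (1 + b) * √(δ * (1 - δ)) * cos (μ * log (1 / b)) = 0) := by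
  have h1δ : 0 < 1 - δ := sub_pos.mpr hδ1
  have hs : √(δ * (1 - δ)) ^ 2 = δ * (1 - δ) := sq_sqrt (by positivity)
  have hμ_sq : μ ^ 2 = δ / (1 - δ) := by rw [hμ, sq_sqrt (by positivity)]
  have hμ_eq : μ = √(δ * (1 - δ)) / (1 - δ) := hμ.trans (sqrt_div_eq_sqrt_mul_div δ h1δ.le)
  have hf_eq : f = fun r => harmonicOscillation μ 1 (√(δ * (1 - δ)) / (α - δ)) (log (1 / r)) := by
    simp only [hf, harmonicOscillation, one_mul]
  refine ⟨fun r hr => ?_, ?_, fun b hb => ?_⟩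
  · rw [hf_eq, ← hμ_sq]
    exact harmonicOscillation_log_one_div_euler_equation _ _ _ hr.ne'
  · rw [hf_eq, hμ_eq]
    exact outer_robin_of_weak_anchoring hδ1.ne hαδ
  · rw [hf_eq, hμ_eq]
    exact inner_robin_iff_of_weak_anchoring hδ1.ne hαδ hs hb.ne'

/-- For `0 < b < 1`, `0 < δ < 1`, `α > 0` with `α ≠ δ`,
`μ = √(δ/(1−δ))` and
`f r = sin(μ log(1/r)) + (√(δ(1−δ))/(α−δ)) cos(μ log(1/r))` on `[b,1]`:
(i) `r f' + r² f'' + (δ/(1−δ)) f = 0` on `[b,1]`;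
(ii) `f'(1) = ((δ−α)/(1−δ)) f(1)`;
(iii) `f'(b) = ((α + δ/b)/(1−δ)) f(b)` holds iff
`(αδ − αbδ + α²b − δ) sin(μ log(1/b)) + α(1+b)√(δ(1−δ)) cos(μ log(1/b)) = 0`. -/
theorem stmt_11 (b δ α : ℝ) (hb0 : 0 < b) (hb1 : b < 1)
    (hδ0 : 0 < δ) (hδ1 : δ < 1) (hα : 0 < α) (hαδ : α ≠ δ)
    (μ : ℝ) (hμ : μ = Real.sqrt (δ / (1 - δ)))
    (f : ℝ → ℝ)
    (hf : f = fun r => Real.sin (μ * Real.log (1 / r))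
      + Real.sqrt (δ * (1 - δ)) / (α - δ) * Real.cos (μ * Real.log (1 / r))) :
    (∀ r ∈ Icc b 1,
      r * deriv f r + r ^ 2 * deriv (deriv f) r + (δ / (1 - δ)) * f r = 0) ∧
    deriv f 1 = ((δ - α) / (1 - δ)) * f 1 ∧
    (deriv f b = ((α + δ / b) / (1 - δ)) * f b ↔
      (α * δ - α * b * δ + α ^ 2 * b - δ) * Real.sin (μ * Real.log (1 / b))
        + α * (1 + b) * Real.sqrt (δ * (1 - δ)) * Real.cos (μ * Real.log (1 / b)) = 0) := by
  obtain ⟨euler, outer, inner⟩ := stmt_11_general δ α hδ0 hδ1 hαδ μ hμ f hf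
  exact ⟨fun r hr => euler r (hb0.trans_le hr.1), outer, inner b hb0⟩
end

section
/- Let 0<b<1 and α>0, and define δ₁₁ = (αb² + α²b + α + 1 − b²α² − b) / (2(αb − b + 1)). Then αb − b + 1 > 0, δ₁₁ > 1/2, and δ₁₁ < 1 if and only if α < 1. Consequently δ₁₁ ∈ (0,1) if and only if 0 < α < 1. -/
open Real Set

/-!
Write `δ₁₁ = N / (2D)` with `D = α b - b + 1`. Both thresholds come from factorizations in which
only one factor can change sign as long as `D > 0`:
`N - D = α ((1 - b) (1 + α b) + b²)` and `2D - N = (1 - α) (1 - b) (1 + α b)`, where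
`1 + α b = D + b > 0`.
-/

/-- The critical elastic anisotropy `δ₁₁(α, b)` for perturbations of azimuthal mode `1` on the
annulus `b ≤ r ≤ 1` with anchoring strength `α`. Through division by zero it takes the value `0`
when `α * b - b + 1 = 0`. -/
def criticalAnisotropy {K : Type*} [Field K] (α b : K) : K :=
  (α * b ^ 2 + α ^ 2 * b + α + 1 - b ^ 2 * α ^ 2 - b) / (2 * (α * b - b + 1))

namespace criticalAnisotropy

section Field

variable {K : Type*} [Field K] [NeZero (2 : K)] {α b : K}

theorem sub_half (hD : α * b - b + 1 ≠ 0) :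
    criticalAnisotropy α b - 1 / 2 =
      α * ((1 - b) * (1 + α * b) + b ^ 2) / (2 * (α * b - b + 1)) := by
  have h2D : 2 * (α * b - b + 1) ≠ 0 := mul_ne_zero two_ne_zero hD
  rw [criticalAnisotropy, eq_div_iff h2D, sub_mul, div_mul_cancel₀ _ h2D, ← mul_assoc,
    one_div_mul_cancel two_ne_zero]
  ring

theorem one_sub (hD : α * b - b + 1 ≠ 0) :
    1 - criticalAnisotropy α b =
      (1 - α) * ((1 - b) * (1 + α * b)) / (2 * (α * b - b + 1)) := by
  have h2D : 2 * (α * b - b + 1) ≠ 0 := mul_ne_zero two_ne_zero hD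
  rw [criticalAnisotropy, eq_div_iff h2D, sub_mul, div_mul_cancel₀ _ h2D]
  ring

end Field

section LinearOrderedField

variable {K : Type*} [Field K] [LinearOrder K] [IsStrictOrderedRing K] {α b : K}

theorem half_lt_iff (hb0 : 0 ≤ b) (hb1 : b ≤ 1) (hD : 0 < α * b - b + 1) :
    1 / 2 < criticalAnisotropy α b ↔ 0 < α := by
  have hfactor : 0 < (1 - b) * (1 + α * b) + b ^ 2 := by
    have hαb : 0 < 1 + α * b := by linarith
    rcases hb1.lt_or_eq with hlt | rfl
    · have := sub_pos.2 hlt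
      positivity
    · norm_num
  rw [← sub_pos, sub_half hD.ne', div_pos_iff_of_pos_right (mul_pos two_pos hD),
    mul_pos_iff_of_pos_right hfactor]

theorem lt_one_iff (hb0 : 0 ≤ b) (hb1 : b < 1) (hD : 0 < α * b - b + 1) :
    criticalAnisotropy α b < 1 ↔ α < 1 := by
  have hfactor : 0 < (1 - b) * (1 + α * b) := mul_pos (sub_pos.2 hb1) (by linarith)
  rw [← sub_pos, one_sub hD.ne', div_pos_iff_of_pos_right (mul_pos two_pos hD),
    mul_pos_iff_of_pos_right hfactor, sub_pos]

end LinearOrderedField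

end criticalAnisotropy

theorem stmt_12_general {K : Type*} [Field K] [LinearOrder K] [IsStrictOrderedRing K] {α b : K}
    (hb0 : 0 ≤ b) (hb1 : b < 1) (hD : 0 < α * b - b + 1) :
    (1 / 2 < criticalAnisotropy α b ↔ 0 < α) ∧ (criticalAnisotropy α b < 1 ↔ α < 1) :=
  ⟨criticalAnisotropy.half_lt_iff hb0 hb1.le hD, criticalAnisotropy.lt_one_iff hb0 hb1 hD⟩

/-- For `0 < b < 1`, `α > 0` and
`δ₁₁ = (αb² + α²b + α + 1 − b²α² − b)/(2(αb − b + 1))`: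
`αb − b + 1 > 0`, `δ₁₁ > 1/2`, `δ₁₁ < 1 ↔ α < 1`; consequently
`δ₁₁ ∈ (0,1) ↔ 0 < α < 1`. -/
theorem stmt_12 (b α : ℝ) (hb0 : 0 < b) (hb1 : b < 1) (hα : 0 < α)
    (δ₁₁ : ℝ)
    (hδ : δ₁₁ = (α * b ^ 2 + α ^ 2 * b + α + 1 - b ^ 2 * α ^ 2 - b) /
      (2 * (α * b - b + 1))) :
    0 < α * b - b + 1 ∧ 1 / 2 < δ₁₁ ∧ (δ₁₁ < 1 ↔ α < 1) ∧
    (δ₁₁ ∈ Ioo (0:ℝ) 1 ↔ (0 < α ∧ α < 1)) := by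
  obtain rfl : δ₁₁ = criticalAnisotropy α b := hδ
  have hD : 0 < α * b - b + 1 := by linarith [mul_pos hα hb0]
  obtain ⟨half_lt_iff, lt_one_iff⟩ := stmt_12_general hb0.le hb1 hD
  have hhalf := half_lt_iff.2 hα
  exact ⟨hD, hhalf, lt_one_iff, and_congr (iff_of_true (one_half_pos.trans hhalf) hα) lt_one_iff⟩
end

section
/- Let k ≥ 2 be an integer, 0<b<1, 0<δ<1, and α>0, and suppose D := δα + α²b − αbδ − δ + k²(1−δ) ≠ 0. If tanh( √((k²−δ)/(1−δ)) · log(1/b) ) + ( (1−δ) α (1+b) / D ) · √((k²−δ)/(1−δ)) = 0, then α < 1 and δ > (k² + α²b)/(αb − α + 1 + k²). -/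
/-!
If `D > 0`, the left-hand side of the compatibility condition is a sum of positive terms, so the
condition forces `D < 0`. Put `N = k² + α²b` and `E = αb − α + 1 + k²`. The two expressions
`D = N − δE = (1 − δ)N + δ(α − 1)(αb + 1)` then give the bound on `δ` and the bound on `α`.
-/

open Real Set

section CompatDenom

variable {R : Type*} [CommRing R]

/-- The denominator `D` in the compatibility condition for an instability of azimuthal mode `k`.
The argument `κ` stands for `k ^ 2`, the eigenvalue of `-∂²/∂φ²` on that mode, and need not be the
square of an integer. -/
def compatDenom (κ b δ α : R) : R :=
  δ * α + α ^ 2 * b - α * b * δ - δ + κ * (1 - δ)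

lemma compatDenom_eq_sub (κ b δ α : R) :
    compatDenom κ b δ α = κ + α ^ 2 * b - δ * (α * b - α + 1 + κ) := by
  unfold compatDenom
  ring

lemma compatDenom_eq_add (κ b δ α : R) :
    compatDenom κ b δ α = (1 - δ) * (κ + α ^ 2 * b) + δ * ((α - 1) * (α * b + 1)) := by
  unfold compatDenom
  ring

lemma lt_one_of_compatDenom_neg [LinearOrder R] [IsStrictOrderedRing R] {κ b δ α : R}
    (hκ : 0 ≤ κ) (hb : 0 ≤ b) (hδ0 : 0 ≤ δ) (hδ1 : δ ≤ 1) (hD : compatDenom κ b δ α < 0) :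
    α < 1 := by
  by_contra! h
  have hδ : 0 ≤ 1 - δ := sub_nonneg.mpr hδ1
  have hα1 : 0 ≤ α - 1 := sub_nonneg.mpr h
  rw [compatDenom_eq_add] at hD
  exact hD.not_ge (by positivity)

lemma div_lt_of_compatDenom_neg {K : Type*} [Field K] [LinearOrder K] [IsStrictOrderedRing K]
    {κ b δ α : K} (hκ : 0 ≤ κ) (hb : 0 ≤ b) (hδ : 0 ≤ δ) (hD : compatDenom κ b δ α < 0) :
    (κ + α ^ 2 * b) / (α * b - α + 1 + κ) < δ := by
  have hlt : κ + α ^ 2 * b < δ * (α * b - α + 1 + κ) := by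
    rwa [compatDenom_eq_sub, sub_neg] at hD
  have hnum : 0 ≤ κ + α ^ 2 * b := by positivity
  have hden : 0 < α * b - α + 1 + κ := pos_of_mul_pos_right (hnum.trans_lt hlt) hδ
  exact (div_lt_iff₀ hden).mpr hlt

end CompatDenom

lemma tanh_pos_of_pos {x : ℝ} (hx : 0 < x) : 0 < tanh x := by
  rw [tanh_eq_sinh_div_cosh]
  exact div_pos (sinh_pos_iff.mpr hx) (cosh_pos x)

/-- The left-hand side of the compatibility condition, with `κ` in place of `k ^ 2`. For `0 < b`
and `δ < 1` it is meaningful only if `δ ≤ κ` and `compatDenom κ b δ α ≠ 0`: otherwise the square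
root or the quotient is zero by convention. -/
noncomputable def compatLHS (κ b δ α : ℝ) : ℝ :=
  tanh (√((κ - δ) / (1 - δ)) * log (1 / b)) +
    (1 - δ) * α * (1 + b) / compatDenom κ b δ α * √((κ - δ) / (1 - δ))

section CompatLHS

variable {κ b δ α : ℝ}

lemma compatLHS_pos (hδκ : δ < κ) (hb0 : 0 < b) (hb1 : b < 1) (hδ1 : δ < 1) (hα : 0 ≤ α)
    (hD : 0 < compatDenom κ b δ α) : 0 < compatLHS κ b δ α := by
  have hδ : 0 < 1 - δ := sub_pos.mpr hδ1
  have hsqrt : 0 < √((κ - δ) / (1 - δ)) := sqrt_pos.mpr (div_pos (sub_pos.mpr hδκ) hδ)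
  have hlog : 0 < log (1 / b) := log_pos (one_lt_one_div hb0 hb1)
  have htanh := tanh_pos_of_pos (mul_pos hsqrt hlog)
  unfold compatLHS
  positivity

theorem stmt_13_general (hδκ : δ < κ) (hb0 : 0 < b) (hb1 : b < 1) (hδ0 : 0 < δ) (hδ1 : δ < 1)
    (hα : 0 ≤ α) (hD : compatDenom κ b δ α ≠ 0) (hcompat : compatLHS κ b δ α = 0) :
    α < 1 ∧ (κ + α ^ 2 * b) / (α * b - α + 1 + κ) < δ := by
  have hDneg : compatDenom κ b δ α < 0 :=
    hD.lt_or_gt.resolve_right fun hDpos ↦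
      (compatLHS_pos hδκ hb0 hb1 hδ1 hα hDpos).ne' hcompat
  have hκ : 0 ≤ κ := (hδ0.trans hδκ).le
  exact ⟨lt_one_of_compatDenom_neg hκ hb0.le hδ0.le hδ1.le hDneg,
    div_lt_of_compatDenom_neg hκ hb0.le hδ0.le hDneg⟩

end CompatLHS

/-- Let `k ≥ 2` be an integer, `0 < b < 1`, `0 < δ < 1`, `α > 0`, and
suppose `D := δα + α²b − αbδ − δ + k²(1−δ) ≠ 0`. If
`tanh(√((k²−δ)/(1−δ)) log(1/b)) + ((1−δ)α(1+b)/D) √((k²−δ)/(1−δ)) = 0`,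
then `α < 1` and `δ > (k² + α²b)/(αb − α + 1 + k²)`. -/
theorem stmt_13 (k : ℕ) (hk : 2 ≤ k) (b δ α : ℝ)
    (hb0 : 0 < b) (hb1 : b < 1) (hδ0 : 0 < δ) (hδ1 : δ < 1) (hα : 0 < α)
    (hD : δ * α + α ^ 2 * b - α * b * δ - δ + (k : ℝ) ^ 2 * (1 - δ) ≠ 0)
    (hcompat : Real.tanh (Real.sqrt (((k : ℝ) ^ 2 - δ) / (1 - δ)) * Real.log (1 / b))
      + ((1 - δ) * α * (1 + b) /
          (δ * α + α ^ 2 * b - α * b * δ - δ + (k : ℝ) ^ 2 * (1 - δ)))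
        * Real.sqrt (((k : ℝ) ^ 2 - δ) / (1 - δ)) = 0) :
    α < 1 ∧ ((k : ℝ) ^ 2 + α ^ 2 * b) / (α * b - α + 1 + (k : ℝ) ^ 2) < δ := by
  have hk1 : (1 : ℝ) ≤ k := by exact_mod_cast one_le_two.trans hk
  exact stmt_13_general (hδ1.trans_le (one_le_pow₀ hk1)) hb0 hb1 hδ0 hδ1 hα.le hD hcompat
end

section
/- Let 0<b₀<1, c₀ ≥ 0, let s:[b₀,1]→ℝ be measurable, and for each integer n ≥ 0 define, for continuously differentiable a,p,c,d:[b₀,1]→ℝ, L_n[a,p,c,d] = ∫_{b₀}^1 { [ (a')² + (p')² + (c')² + (d')² + ((n²+4)/r²)(a² + p² + c² + d²) + (8n/r²)(a d − p c) ] r + c₀ (a² + p² + c² + d²)(2s² − 1) r + 4 c₀ s² (a² + p²) r } dr. Then for every integer n ≥ 1, L_{n+2}[a,p,c,d] − L_n[a,p,c,d] = ∫_{b₀}^1 [ (4n+4)(a² + p² + c² + d²) + 16(a d − p c) ] (1/r) dr ≥ 0. -/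
open Real Set MeasureTheory

/-!
In the real mode number `ν`, the energy is a quadratic polynomial whose coefficients of `ν²` and `ν`
are the integrals of `(a² + p² + c² + d²) / r` and `8 (a d - p c) / r`; neither the derivatives nor
the bulk term enter the difference of two energies. Since
`a² + p² + c² + d² + 2 (a d - p c) = (a + d)² + (p - c)²`, the integrand of the difference
between the modes `μ` and `ν` is nonnegative as soon as `μ ≤ ν` and `4 ≤ μ + ν`;
the step from `n` to `n + 2` is the case `1 ≤ n`.
-/

/-- A profile `f` on `[b, R]` of finite elastic energy: `f` is differentiable there, one-sidedly
at the endpoints, and its derivative `f'` has an integrable square. -/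
structure HasSqIntegrableDeriv (b R : ℝ) (f f' : ℝ → ℝ) : Prop where
  hasDerivWithinAt : ∀ r ∈ Icc b R, HasDerivWithinAt f (f' r) (Icc b R) r
  intervalIntegrable_sq : IntervalIntegrable (fun r => f' r ^ 2) volume b R

namespace HasSqIntegrableDeriv

variable {b R : ℝ} {f f' : ℝ → ℝ}

theorem continuousOn (hf : HasSqIntegrableDeriv b R f f') : ContinuousOn f (Icc b R) :=
  HasDerivWithinAt.continuousOn hf.hasDerivWithinAt

theorem of_hasDerivAt_of_continuousOn (hbR : b ≤ R) (hf : ∀ r ∈ Icc b R, HasDerivAt f (f' r) r)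
    (hf' : ContinuousOn f' (Icc b R)) : HasSqIntegrableDeriv b R f f' where
  hasDerivWithinAt r hr := (hf r hr).hasDerivWithinAt
  intervalIntegrable_sq := (hf'.pow 2).intervalIntegrable_of_Icc hbR

end HasSqIntegrableDeriv

/-- The integrand at radius `r` of the mode functional `L_ν[a, p, c, d]`, for a real mode number
`ν`. The derivatives of `a`, `p`, `c`, `d` are passed as separate functions. -/
noncomputable def modeDensity (c₀ : ℝ) (s a p c d a' p' c' d' : ℝ → ℝ) (ν r : ℝ) : ℝ :=
  (a' r ^ 2 + p' r ^ 2 + c' r ^ 2 + d' r ^ 2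
      + ((ν ^ 2 + 4) / r ^ 2) * (a r ^ 2 + p r ^ 2 + c r ^ 2 + d r ^ 2)
      + (8 * ν / r ^ 2) * (a r * d r - p r * c r)) * r
    + c₀ * (a r ^ 2 + p r ^ 2 + c r ^ 2 + d r ^ 2) * (2 * s r ^ 2 - 1) * r
    + 4 * c₀ * s r ^ 2 * (a r ^ 2 + p r ^ 2) * r

/-- The mode functional `L_ν[a, p, c, d]` on the annulus of radii `b` and `R`. -/
noncomputable def modeEnergy (b R c₀ : ℝ) (s a p c d a' p' c' d' : ℝ → ℝ) (ν : ℝ) : ℝ :=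
  ∫ r in b..R, modeDensity c₀ s a p c d a' p' c' d' ν r

/-- The quadratic form in the amplitudes by which `r` times the energy density grows from mode `μ`
to mode `ν`. -/
def modeIncrement (μ ν a p c d : ℝ) : ℝ :=
  (ν ^ 2 - μ ^ 2) * (a ^ 2 + p ^ 2 + c ^ 2 + d ^ 2) + 8 * (ν - μ) * (a * d - p * c)

theorem modeIncrement_add_two (ν a p c d : ℝ) :
    modeIncrement ν (ν + 2) a p c d =
      (4 * ν + 4) * (a ^ 2 + p ^ 2 + c ^ 2 + d ^ 2) + 16 * (a * d - p * c) := by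
  unfold modeIncrement
  ring

theorem modeIncrement_nonneg {μ ν : ℝ} (hμν : μ ≤ ν) (h4 : 4 ≤ μ + ν) (a p c d : ℝ) :
    0 ≤ modeIncrement μ ν a p c d := by
  have factorization : modeIncrement μ ν a p c d =
      (ν - μ) * ((μ + ν - 4) * (a ^ 2 + p ^ 2 + c ^ 2 + d ^ 2)
        + 4 * ((a + d) ^ 2 + (p - c) ^ 2)) := by
    unfold modeIncrement
    ring
  rw [factorization]
  exact mul_nonneg (sub_nonneg.2 hμν)
    (add_nonneg (mul_nonneg (sub_nonneg.2 h4) (by positivity)) (by positivity))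

section ModeEnergy

variable {b R c₀ : ℝ} {s a p c d a' p' c' d' : ℝ → ℝ}

theorem modeDensity_sub (μ ν : ℝ) {r : ℝ} (hr : r ≠ 0) :
    modeDensity c₀ s a p c d a' p' c' d' ν r - modeDensity c₀ s a p c d a' p' c' d' μ r =
      modeIncrement μ ν (a r) (p r) (c r) (d r) * (1 / r) := by
  unfold modeDensity modeIncrement
  field_simp
  ring

theorem intervalIntegrable_modeDensity (hb : 0 < b) (hbR : b ≤ R)
    (hs : IntervalIntegrable (fun r => s r ^ 2) volume b R)
    (ha : HasSqIntegrableDeriv b R a a') (hp : HasSqIntegrableDeriv b R p p')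
    (hc : HasSqIntegrableDeriv b R c c') (hd : HasSqIntegrableDeriv b R d d') (ν : ℝ) :
    IntervalIntegrable (modeDensity c₀ s a p c d a' p' c' d' ν) volume b R := by
  have ha_cont := ha.continuousOn
  have hp_cont := hp.continuousOn
  have hc_cont := hc.continuousOn
  have hd_cont := hd.continuousOn
  have radial : IntervalIntegrable
      (fun r => (a' r ^ 2 + p' r ^ 2 + c' r ^ 2 + d' r ^ 2) * r) volume b R :=
    (((ha.intervalIntegrable_sq.add hp.intervalIntegrable_sq).add
      hc.intervalIntegrable_sq).add hd.intervalIntegrable_sq).mul_continuousOn continuousOn_id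
  have potential : IntervalIntegrable
      (fun r => (((ν ^ 2 + 4) / r ^ 2) * (a r ^ 2 + p r ^ 2 + c r ^ 2 + d r ^ 2)
          + (8 * ν / r ^ 2) * (a r * d r - p r * c r)) * r
        - c₀ * (a r ^ 2 + p r ^ 2 + c r ^ 2 + d r ^ 2) * r) volume b R := by
    have r_sq_ne_zero : ∀ r ∈ Icc b R, r ^ 2 ≠ 0 := fun r hr =>
      pow_ne_zero 2 (hb.trans_le hr.1).ne'
    refine ContinuousOn.intervalIntegrable_of_Icc hbR ?_
    fun_prop (disch := assumption)
  have order_parameter : IntervalIntegrable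
      (fun r => s r ^ 2 * (2 * c₀ * (a r ^ 2 + p r ^ 2 + c r ^ 2 + d r ^ 2) * r
        + 4 * c₀ * (a r ^ 2 + p r ^ 2) * r)) volume b R := by
    refine hs.mul_continuousOn ?_
    rw [uIcc_of_le hbR]
    fun_prop
  refine ((radial.add potential).add order_parameter).congr fun r _ => ?_
  simp only [modeDensity]
  ring

theorem modeEnergy_sub (hb : 0 < b) (hbR : b ≤ R)
    (hs : IntervalIntegrable (fun r => s r ^ 2) volume b R)
    (ha : HasSqIntegrableDeriv b R a a') (hp : HasSqIntegrableDeriv b R p p')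
    (hc : HasSqIntegrableDeriv b R c c') (hd : HasSqIntegrableDeriv b R d d') (μ ν : ℝ) :
    modeEnergy b R c₀ s a p c d a' p' c' d' ν - modeEnergy b R c₀ s a p c d a' p' c' d' μ =
      ∫ r in b..R, modeIncrement μ ν (a r) (p r) (c r) (d r) * (1 / r) := by
  have integrable (κ : ℝ) := intervalIntegrable_modeDensity (c₀ := c₀) hb hbR hs ha hp hc hd κ
  unfold modeEnergy
  rw [← intervalIntegral.integral_sub (integrable ν) (integrable μ)]
  refine intervalIntegral.integral_congr fun r hr => modeDensity_sub μ ν ?_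
  rw [uIcc_of_le hbR] at hr
  exact (hb.trans_le hr.1).ne'

theorem integral_modeIncrement_nonneg (hb : 0 ≤ b) (hbR : b ≤ R) {μ ν : ℝ} (hμν : μ ≤ ν)
    (h4 : 4 ≤ μ + ν) (a p c d : ℝ → ℝ) :
    0 ≤ ∫ r in b..R, modeIncrement μ ν (a r) (p r) (c r) (d r) * (1 / r) :=
  intervalIntegral.integral_nonneg hbR fun _ hr =>
    mul_nonneg (modeIncrement_nonneg hμν h4 _ _ _ _) (one_div_nonneg.2 (hb.trans hr.1))

theorem stmt_14_general (hb : 0 < b) (hbR : b ≤ R)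
    (hs : IntervalIntegrable (fun r => s r ^ 2) volume b R)
    (ha : HasSqIntegrableDeriv b R a a') (hp : HasSqIntegrableDeriv b R p p')
    (hc : HasSqIntegrableDeriv b R c c') (hd : HasSqIntegrableDeriv b R d d')
    {μ ν : ℝ} (hμν : μ ≤ ν) (h4 : 4 ≤ μ + ν) :
    modeEnergy b R c₀ s a p c d a' p' c' d' ν - modeEnergy b R c₀ s a p c d a' p' c' d' μ =
        (∫ r in b..R, modeIncrement μ ν (a r) (p r) (c r) (d r) * (1 / r)) ∧
      0 ≤ modeEnergy b R c₀ s a p c d a' p' c' d' ν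
        - modeEnergy b R c₀ s a p c d a' p' c' d' μ := by
  have energy_sub := modeEnergy_sub (c₀ := c₀) hb hbR hs ha hp hc hd μ ν
  exact ⟨energy_sub, energy_sub ▸ integral_modeIncrement_nonneg hb.le hbR hμν h4 a p c d⟩

end ModeEnergy

/-- With `0 < b₀ < 1`, `c₀ ≥ 0`, `s : [b₀,1] → ℝ` measurable (with `s²`
integrable so all the integrals are defined), and continuously differentiable
`a, p, c, d : [b₀,1] → ℝ`, the mode functionals
`L_n[a,p,c,d] = ∫_{b₀}^1 {[(a')² + (p')² + (c')² + (d')²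
  + ((n²+4)/r²)(a²+p²+c²+d²) + (8n/r²)(ad − pc)] r
  + c₀ (a²+p²+c²+d²)(2s²−1) r + 4c₀ s² (a²+p²) r} dr`
satisfy, for every `n ≥ 1`,
`L_{n+2} − L_n = ∫_{b₀}^1 [(4n+4)(a²+p²+c²+d²) + 16(ad − pc)] (1/r) dr ≥ 0`. -/
theorem stmt_14 (b₀ c₀ : ℝ) (hb0 : 0 < b₀) (hb1 : b₀ < 1) (hc₀ : 0 ≤ c₀)
    (s : ℝ → ℝ) (hs : Measurable s)
    (hs2 : IntervalIntegrable (fun r => (s r) ^ 2) volume b₀ 1)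
    (a p c d a' p' c' d' : ℝ → ℝ)
    (hda : ∀ r ∈ Icc b₀ 1, HasDerivAt a (a' r) r)
    (hdp : ∀ r ∈ Icc b₀ 1, HasDerivAt p (p' r) r)
    (hdc : ∀ r ∈ Icc b₀ 1, HasDerivAt c (c' r) r)
    (hdd : ∀ r ∈ Icc b₀ 1, HasDerivAt d (d' r) r)
    (ha'c : ContinuousOn a' (Icc b₀ 1)) (hp'c : ContinuousOn p' (Icc b₀ 1))
    (hc'c : ContinuousOn c' (Icc b₀ 1)) (hd'c : ContinuousOn d' (Icc b₀ 1))
    (L : ℕ → ℝ)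
    (hL : ∀ n : ℕ, L n = ∫ r in b₀..1,
      (((a' r) ^ 2 + (p' r) ^ 2 + (c' r) ^ 2 + (d' r) ^ 2
          + (((n : ℝ) ^ 2 + 4) / r ^ 2) *
              ((a r) ^ 2 + (p r) ^ 2 + (c r) ^ 2 + (d r) ^ 2)
          + (8 * (n : ℝ) / r ^ 2) * (a r * d r - p r * c r)) * r
        + c₀ * ((a r) ^ 2 + (p r) ^ 2 + (c r) ^ 2 + (d r) ^ 2)
            * (2 * (s r) ^ 2 - 1) * r
        + 4 * c₀ * (s r) ^ 2 * ((a r) ^ 2 + (p r) ^ 2) * r)) :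
    ∀ n : ℕ, 1 ≤ n →
      L (n + 2) - L n
        = (∫ r in b₀..1,
            ((4 * (n : ℝ) + 4) * ((a r) ^ 2 + (p r) ^ 2 + (c r) ^ 2 + (d r) ^ 2)
              + 16 * (a r * d r - p r * c r)) * (1 / r)) ∧
      0 ≤ L (n + 2) - L n := by
  intro n hn
  have hn' : (1 : ℝ) ≤ n := mod_cast hn
  have increment := stmt_14_general (c₀ := c₀) hb0 hb1.le hs2
    (.of_hasDerivAt_of_continuousOn hb1.le hda ha'c)
    (.of_hasDerivAt_of_continuousOn hb1.le hdp hp'c)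
    (.of_hasDerivAt_of_continuousOn hb1.le hdc hc'c)
    (.of_hasDerivAt_of_continuousOn hb1.le hdd hd'c)
    (μ := n) (ν := n + 2) (by linarith) (by linarith)
  simpa only [hL, Nat.cast_add, Nat.cast_ofNat, modeEnergy, modeDensity, modeIncrement_add_two]
    using increment
end

section
/- Let 0<b₀<1 and c ∈ ℝ. Suppose s:[b₀,1]→ℝ is twice continuously differentiable, strictly positive, and satisfies s''(r) + s'(r)/r − 4 s(r)/r² = c · s(r)(2 s(r)² − 1) on [b₀,1]. Let a:[b₀,1]→ℝ be continuously differentiable with a(b₀)=a(1)=0, and set a₀(r) = s(r) a(r). Then ∫_{b₀}^1 [ (a₀'(r))² r + 4 a₀(r)²/r + c (2 s(r)² − 1) a₀(r)² r ] dr = ∫_{b₀}^1 s(r)² (a'(r))² r dr. In particular, if a is not identically zero, the left-hand side is strictly positive. -/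
/-!
Hardy's trick. If `(p s')' = q s`, then writing a test function as `s a` removes the potential `q`
from the quadratic form: `p ((s a)')² + q (s a)²` differs from `p s² (a')²` by the exact derivative
`(p s' s a²)'`, which integrates to zero when `a` vanishes at both endpoints. In polar coordinates
`s'' + s' / r = r⁻¹ (r s')'`, so `s'' + s' / r - k s / r² = v s` has this form with `p = r` and
`q = k / r + v r`. If `s` has no zeros, the remaining integral vanishes only for constant `a`.
-/

open Real Set

theorem hasDerivAt_flux_mul_sq {𝕜 : Type*} [NontriviallyNormedField 𝕜]
    {p q s s' a a' : 𝕜 → 𝕜} {x : 𝕜} (hs : HasDerivAt s (s' x) x)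
    (hflux : HasDerivAt (fun r ↦ p r * s' r) (q x * s x) x) (ha : HasDerivAt a (a' x) x) :
    HasDerivAt (fun r ↦ p r * s' r * s r * a r ^ 2)
      ((s' x * a x + s x * a' x) ^ 2 * p x + q x * (s x * a x) ^ 2
        - s x ^ 2 * a' x ^ 2 * p x) x := by
  refine ((hflux.fun_mul hs).fun_mul (ha.fun_pow 2)).congr_deriv ?_
  push_cast
  ring

theorem integral_energy_mul_eq_add_boundary {p q s s' a a' : ℝ → ℝ} {α β : ℝ}
    (hs : ∀ r ∈ uIcc α β, HasDerivAt s (s' r) r)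
    (hflux : ∀ r ∈ uIcc α β, HasDerivAt (fun r ↦ p r * s' r) (q r * s r) r)
    (ha : ∀ r ∈ uIcc α β, HasDerivAt a (a' r) r)
    (henergy : IntervalIntegrable
      (fun r ↦ (s' r * a r + s r * a' r) ^ 2 * p r + q r * (s r * a r) ^ 2)
      MeasureTheory.volume α β)
    (hweighted : IntervalIntegrable (fun r ↦ s r ^ 2 * a' r ^ 2 * p r)
      MeasureTheory.volume α β) :
    ∫ r in α..β, ((s' r * a r + s r * a' r) ^ 2 * p r + q r * (s r * a r) ^ 2)
      = (∫ r in α..β, s r ^ 2 * a' r ^ 2 * p r)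
        + (p β * s' β * s β * a β ^ 2 - p α * s' α * s α * a α ^ 2) := by
  have hboundary := intervalIntegral.integral_eq_sub_of_hasDerivAt
    (fun r hr ↦ hasDerivAt_flux_mul_sq (hs r hr) (hflux r hr) (ha r hr))
    (henergy.sub hweighted)
  rw [intervalIntegral.integral_sub henergy hweighted] at hboundary
  linarith

theorem hasDerivAt_id_mul_of_radial_equation {𝕜 : Type*} [NontriviallyNormedField 𝕜]
    {s' : 𝕜 → 𝕜} {r s s'' k v : 𝕜} (hr : r ≠ 0) (hs' : HasDerivAt s' s'' r)
    (hode : s'' + s' r / r - k * s / r ^ 2 = v * s) :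
    HasDerivAt (fun ρ ↦ ρ * s' ρ) ((k / r + v * r) * s) r := by
  refine ((hasDerivAt_id' r).fun_mul hs').congr_deriv ?_
  calc 1 * s' r + r * s'' = (s'' + s' r / r - k * s / r ^ 2) * r + k * s / r := by
        field_simp
        ring
    _ = (k / r + v * r) * s := by
        rw [hode]
        ring

theorem integral_radial_energy_mul_eq {s s' s'' v a a' : ℝ → ℝ} {k α β : ℝ}
    (h0 : (0 : ℝ) ∉ uIcc α β)
    (hds : ∀ r ∈ uIcc α β, HasDerivAt s (s' r) r)
    (hds' : ∀ r ∈ uIcc α β, HasDerivAt s' (s'' r) r)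
    (hv : ContinuousOn v (uIcc α β))
    (hode : ∀ r ∈ uIcc α β, s'' r + s' r / r - k * s r / r ^ 2 = v r * s r)
    (hda : ∀ r ∈ uIcc α β, HasDerivAt a (a' r) r)
    (ha' : ContinuousOn a' (uIcc α β)) (haα : a α = 0) (haβ : a β = 0) :
    ∫ r in α..β, ((s' r * a r + s r * a' r) ^ 2 * r + k * (s r * a r) ^ 2 / r
        + v r * (s r * a r) ^ 2 * r)
      = ∫ r in α..β, s r ^ 2 * a' r ^ 2 * r := by
  have hs : ContinuousOn s (uIcc α β) := HasDerivAt.continuousOn hds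
  have hs' : ContinuousOn s' (uIcc α β) := HasDerivAt.continuousOn hds'
  have ha : ContinuousOn a (uIcc α β) := HasDerivAt.continuousOn hda
  have hne : ∀ r ∈ uIcc α β, r ≠ 0 := fun _ hr ↦ ne_of_mem_of_not_mem hr h0
  have henergy : ContinuousOn (fun r ↦ (s' r * a r + s r * a' r) ^ 2 * r
      + (k / r + v r * r) * (s r * a r) ^ 2) (uIcc α β) := by
    fun_prop (disch := assumption)
  have hweighted : ContinuousOn (fun r ↦ s r ^ 2 * a' r ^ 2 * r) (uIcc α β) := by fun_prop
  have hflux : ∀ r ∈ uIcc α β,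
      HasDerivAt (fun ρ ↦ ρ * s' ρ) ((k / r + v r * r) * s r) r := fun r hr ↦
    hasDerivAt_id_mul_of_radial_equation (hne r hr) (hds' r hr) (hode r hr)
  calc
    _ = ∫ r in α..β, ((s' r * a r + s r * a' r) ^ 2 * r
        + (k / r + v r * r) * (s r * a r) ^ 2) :=
      intervalIntegral.integral_congr fun r _ ↦ by ring
    _ = _ := integral_energy_mul_eq_add_boundary hds hflux hda henergy.intervalIntegrable
      hweighted.intervalIntegrable
    _ = _ := by simp [haα, haβ]

theorem integral_mul_sq_deriv_pos {w f f' : ℝ → ℝ} {α β x : ℝ}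
    (hw : ContinuousOn w (Icc α β)) (hwpos : ∀ r ∈ Ioc α β, 0 < w r)
    (hf : ContinuousOn f (Icc α β)) (hderiv : ∀ r ∈ Ioo α β, HasDerivAt f (f' r) r)
    (hf' : ContinuousOn f' (Icc α β)) (hx : x ∈ Icc α β) (hne : f x ≠ f α) :
    0 < ∫ r in α..β, w r * f' r ^ 2 := by
  have hαx : α < x := hx.1.lt_of_ne fun h ↦ hne (h ▸ rfl)
  obtain ⟨y, hy, hslope⟩ := exists_hasDerivAt_eq_slope f f' hαx
    (hf.mono (Icc_subset_Icc_right hx.2)) fun r hr ↦ hderiv r (Ioo_subset_Ioo_right hx.2 hr)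
  have hyβ : y ∈ Ioc α β := ⟨hy.1, hy.2.le.trans hx.2⟩
  have hy_ne : f' y ≠ 0 := hslope ▸ div_ne_zero (sub_ne_zero.2 hne) (sub_pos.2 hαx).ne'
  exact intervalIntegral.integral_pos (hαx.trans_le hx.2) (hw.mul (hf'.pow 2))
    (fun r hr ↦ mul_nonneg (hwpos r hr).le (sq_nonneg _))
    ⟨y, Ioc_subset_Icc_self hyβ, mul_pos (hwpos y hyβ) (sq_pos_of_ne_zero hy_ne)⟩

theorem stmt_15_general {s s' s'' v a a' : ℝ → ℝ} {k α β : ℝ} (hα : 0 < α) (hαβ : α ≤ β)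
    (hds : ∀ r ∈ Icc α β, HasDerivAt s (s' r) r)
    (hds' : ∀ r ∈ Icc α β, HasDerivAt s' (s'' r) r)
    (hsne : ∀ r ∈ Icc α β, s r ≠ 0)
    (hv : ContinuousOn v (Icc α β))
    (hode : ∀ r ∈ Icc α β, s'' r + s' r / r - k * s r / r ^ 2 = v r * s r)
    (hda : ∀ r ∈ Icc α β, HasDerivAt a (a' r) r)
    (ha' : ContinuousOn a' (Icc α β)) (haα : a α = 0) (haβ : a β = 0) :
    (∫ r in α..β, ((s' r * a r + s r * a' r) ^ 2 * r + k * (s r * a r) ^ 2 / r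
        + v r * (s r * a r) ^ 2 * r))
      = ∫ r in α..β, s r ^ 2 * a' r ^ 2 * r ∧
    ((∃ r ∈ Icc α β, a r ≠ 0) →
      0 < ∫ r in α..β, ((s' r * a r + s r * a' r) ^ 2 * r + k * (s r * a r) ^ 2 / r
        + v r * (s r * a r) ^ 2 * r)) := by
  have hIcc : uIcc α β = Icc α β := uIcc_of_le hαβ
  have hidentity := integral_radial_energy_mul_eq (hIcc ▸ fun h0 ↦ hα.not_ge h0.1) (hIcc ▸ hds)
    (hIcc ▸ hds') (hIcc ▸ hv) (hIcc ▸ hode) (hIcc ▸ hda) (hIcc ▸ ha') haα haβ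
  refine ⟨hidentity, fun ⟨x, hx, hax⟩ ↦ ?_⟩
  have hs : ContinuousOn s (Icc α β) := HasDerivAt.continuousOn hds
  have hweight : ∀ r ∈ Ioc α β, 0 < s r ^ 2 * r := fun r hr ↦
    mul_pos (sq_pos_of_ne_zero (hsne r (Ioc_subset_Icc_self hr))) (hα.trans hr.1)
  rw [hidentity]
  simpa only [mul_right_comm] using integral_mul_sq_deriv_pos (by fun_prop) hweight
    (HasDerivAt.continuousOn hda) (fun r hr ↦ hda r (Ioo_subset_Icc_self hr)) ha' hx (haα ▸ hax)

/-- With `0 < b₀ < 1`, `c ∈ ℝ`, `s` twice continuously differentiable,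
strictly positive, satisfying `s'' + s'/r − 4s/r² = c s(2s² − 1)` on `[b₀,1]`, and `a`
continuously differentiable with `a b₀ = a 1 = 0`, setting `a₀ = s·a` (so
`a₀' = s' a + s a'`) one has
`∫_{b₀}^1 [(a₀')² r + 4 a₀²/r + c(2s² − 1) a₀² r] dr = ∫_{b₀}^1 s² (a')² r dr`,
which is strictly positive if `a` is not identically zero. -/
theorem stmt_15 (b₀ c : ℝ) (hb0 : 0 < b₀) (hb1 : b₀ < 1)
    (s s' s'' : ℝ → ℝ)
    (hds : ∀ r ∈ Icc b₀ 1, HasDerivAt s (s' r) r)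
    (hds' : ∀ r ∈ Icc b₀ 1, HasDerivAt s' (s'' r) r)
    (hs''c : ContinuousOn s'' (Icc b₀ 1))
    (hspos : ∀ r ∈ Icc b₀ 1, 0 < s r)
    (hode : ∀ r ∈ Icc b₀ 1,
      s'' r + s' r / r - 4 * s r / r ^ 2 = c * s r * (2 * (s r) ^ 2 - 1))
    (a a' : ℝ → ℝ)
    (hda : ∀ r ∈ Icc b₀ 1, HasDerivAt a (a' r) r)
    (ha'c : ContinuousOn a' (Icc b₀ 1))
    (hab : a b₀ = 0) (ha1 : a 1 = 0) :
    (∫ r in b₀..1, ((s' r * a r + s r * a' r) ^ 2 * r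
        + 4 * (s r * a r) ^ 2 / r
        + c * (2 * (s r) ^ 2 - 1) * (s r * a r) ^ 2 * r))
      = ∫ r in b₀..1, (s r) ^ 2 * (a' r) ^ 2 * r ∧
    ((∃ r ∈ Icc b₀ 1, a r ≠ 0) →
      0 < ∫ r in b₀..1, ((s' r * a r + s r * a' r) ^ 2 * r
        + 4 * (s r * a r) ^ 2 / r
        + c * (2 * (s r) ^ 2 - 1) * (s r * a r) ^ 2 * r)) := by
  have hs : ContinuousOn s (Icc b₀ 1) := HasDerivAt.continuousOn hds
  exact stmt_15_general (v := fun r ↦ c * (2 * s r ^ 2 - 1)) hb0 hb1.le hds hds'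
    (fun r hr ↦ (hspos r hr).ne') (by fun_prop) (fun r hr ↦ (hode r hr).trans (by ring))
    hda ha'c hab ha1
end

section
/- Let 0<b₀<1 and c > 0. Suppose s:[b₀,1]→ℝ is twice continuously differentiable, nonnegative, satisfies s''(r) + s'(r)/r − 4 s(r)/r² = c · s(r)(2 s(r)² − 1) on [b₀,1], and s(b₀) = s(1) = 1/√2. Then s(r) ≤ 1/√2 for all r ∈ [b₀,1]. -/
open Real Set

/-!
Maximum principle. At an interior maximum `m` of `s` with `s m > 1/√2` the first-order term
vanishes, and the equation makes `s'' m = 4 s m / m² + c s m (2 (s m)² - 1)` positive. But `s''` is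
nonpositive at a local maximum: if it were positive, `m` would also be a local minimum by the second
derivative test, so `s` would be constant near `m` and `s'' m` would vanish.
-/

theorem deriv_deriv_nonpos_of_isLocalMax {f : ℝ → ℝ} {x : ℝ} (hmax : IsLocalMax f x)
    (hf : ContinuousAt f x) : deriv (deriv f) x ≤ 0 := by
  by_contra! hpos
  have hmin : IsLocalMin f x := isLocalMin_of_deriv_deriv_pos hpos hmax.deriv_eq_zero hf
  have hconst : f =ᶠ[nhds x] fun _ => f x := by
    filter_upwards [hmax, hmin] with y hle hge using le_antisymm hle hge
  have hzero : deriv (deriv f) x = 0 := by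
    rw [hconst.deriv.deriv_eq, deriv_const', deriv_const]
  exact hpos.ne' hzero

theorem le_of_second_deriv_pos_of_critical {f f' f'' : ℝ → ℝ} {a b M : ℝ}
    (hf : ContinuousOn f (Icc a b))
    (hf' : ∀ x ∈ Ioo a b, HasDerivAt f (f' x) x)
    (hf'' : ∀ x ∈ Ioo a b, HasDerivAt f' (f'' x) x)
    (hpos : ∀ x ∈ Ioo a b, M < f x → f' x = 0 → 0 < f'' x)
    (ha : f a ≤ M) (hb : f b ≤ M) : ∀ x ∈ Icc a b, f x ≤ M := by
  intro x hx
  by_contra! hlt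
  obtain ⟨m, hm, hmax⟩ := isCompact_Icc.exists_isMaxOn ⟨x, hx⟩ hf
  have hMm : M < f m := hlt.trans_le (hmax hx)
  have ham : a ≠ m := by rintro rfl; exact ha.not_gt hMm
  have hmb : m ≠ b := by rintro rfl; exact hb.not_gt hMm
  have hmI : m ∈ Ioo a b := ⟨hm.1.lt_of_ne ham, hm.2.lt_of_ne hmb⟩
  have hlocal : IsLocalMax f m := hmax.isLocalMax (Icc_mem_nhds hmI.1 hmI.2)
  have hderiv : deriv f =ᶠ[nhds m] f' := by
    filter_upwards [Ioo_mem_nhds hmI.1 hmI.2] with y hy using (hf' y hy).deriv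
  have hnonpos : f'' m ≤ 0 := by
    rw [← (hf'' m hmI).deriv, ← hderiv.deriv_eq]
    exact deriv_deriv_nonpos_of_isLocalMax hlocal (hf' m hmI).continuousAt
  exact hnonpos.not_gt (hpos m hmI hMm (hlocal.hasDerivAt_eq_zero (hf' m hmI)))

theorem one_lt_mul_sq_of_one_div_sqrt_lt {a t : ℝ} (ha : 0 < a) (ht : 1 / √a < t) :
    1 < a * t ^ 2 := by
  have hprod : 1 < t * √a := (div_lt_iff₀ (sqrt_pos.2 ha)).1 ht
  calc
    1 < (t * √a) ^ 2 := one_lt_pow₀ hprod two_ne_zero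
    _ = a * t ^ 2 := by rw [mul_pow, sq_sqrt ha.le, mul_comm]

theorem stmt_16_general {a b c : ℝ} (ha : 0 ≤ a) (hc : 0 ≤ c) {s s' s'' : ℝ → ℝ}
    (hs : ContinuousOn s (Icc a b))
    (hds : ∀ r ∈ Ioo a b, HasDerivAt s (s' r) r)
    (hds' : ∀ r ∈ Ioo a b, HasDerivAt s' (s'' r) r)
    (hode : ∀ r ∈ Ioo a b,
      s'' r + s' r / r - 4 * s r / r ^ 2 = c * s r * (2 * (s r) ^ 2 - 1))
    (hsa : s a ≤ 1 / √2) (hsb : s b ≤ 1 / √2) :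
    ∀ r ∈ Icc a b, s r ≤ 1 / √2 := by
  refine le_of_second_deriv_pos_of_critical hs hds hds' (fun r hr hlt hcrit => ?_) hsa hsb
  have hr0 : 0 < r := ha.trans_lt hr.1
  have hs0 : 0 < s r := lt_trans (by positivity) hlt
  have hreaction : 0 ≤ 2 * s r ^ 2 - 1 :=
    (sub_pos.2 (one_lt_mul_sq_of_one_div_sqrt_lt two_pos hlt)).le
  calc
    0 < 4 * s r / r ^ 2 + c * s r * (2 * s r ^ 2 - 1) := by positivity
    _ = s'' r := by rw [← hode r hr, hcrit]; ring

/-- With `0 < b₀ < 1` and `c > 0`, if `s` is twice continuously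
differentiable, nonnegative, satisfies `s'' + s'/r − 4s/r² = c s(2s² − 1)` on `[b₀,1]`
and `s b₀ = s 1 = 1/√2`, then `s ≤ 1/√2` on `[b₀,1]`. -/
theorem stmt_16 (b₀ c : ℝ) (hb0 : 0 < b₀) (hb1 : b₀ < 1) (hc : 0 < c)
    (s s' s'' : ℝ → ℝ)
    (hds : ∀ r ∈ Icc b₀ 1, HasDerivAt s (s' r) r)
    (hds' : ∀ r ∈ Icc b₀ 1, HasDerivAt s' (s'' r) r)
    (hs''c : ContinuousOn s'' (Icc b₀ 1))
    (hsnn : ∀ r ∈ Icc b₀ 1, 0 ≤ s r)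
    (hode : ∀ r ∈ Icc b₀ 1,
      s'' r + s' r / r - 4 * s r / r ^ 2 = c * s r * (2 * (s r) ^ 2 - 1))
    (hsb : s b₀ = 1 / Real.sqrt 2) (hs1 : s 1 = 1 / Real.sqrt 2) :
    ∀ r ∈ Icc b₀ 1, s r ≤ 1 / Real.sqrt 2 := by
  have hsub : Ioo b₀ 1 ⊆ Icc b₀ 1 := Ioo_subset_Icc_self
  exact stmt_16_general hb0.le hc.le (HasDerivAt.continuousOn hds) (fun r hr => hds r (hsub hr))
    (fun r hr => hds' r (hsub hr)) (fun r hr => hode r (hsub hr)) hsb.le hs1.le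
end

section
/- Let 0<b₀<1 and c > 0. Suppose s, u : [b₀,1]→ℝ are twice continuously differentiable, nonnegative, and both satisfy the equation v''(r) + v'(r)/r − 4 v(r)/r² = c · v(r)(2 v(r)² − 1) on [b₀,1]. Assume s(b₀) = s(1) = 1/√2, u(b₀) = 0, u(1) = 1/√2, and u is strictly increasing on [b₀,1]. Then u(r) ≤ s(r) for all r ∈ [b₀,1]. -/
open Real Set

/-!
Both equations have the divergence form `(r v')' = v f(r, v)` with `f(r, ·)` increasing on
`(0, ∞)`. In the quotient `w = u / s` the linear parts cancel, `(r s² w')' = s (r u')' - u (r s')'`,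
and the right-hand side is `s u (f(r, u) - f(r, s)) ≥ 0` wherever `w > 1`. So `w` obeys a maximum
principle on `{w > 1}`, and `w ≤ 1` at the endpoints forces `w ≤ 1`. Dividing by `s` is legitimate
because an interior zero of the nonnegative function `s` would be a double zero, and then `s` would
vanish identically by uniqueness for the linear equation with coefficients frozen along `s`.
-/

section MaximumPrinciple

variable {a b M : ℝ} {w F F' P : ℝ → ℝ}

lemma lt_right_of_flux_nonneg {x : ℝ} (hx : x ∈ Ioo a b) (hwc : ContinuousOn w (Icc a b))
    (hw : ∀ r ∈ Ioo a b, HasDerivAt w (F r / P r) r)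
    (hF : ∀ r ∈ Ioo a b, HasDerivAt F (F' r) r)
    (hP : ∀ r ∈ Ioo a b, 0 ≤ P r)
    (hF' : ∀ r ∈ Ioo a b, M < w r → 0 ≤ F' r) (hFx : 0 ≤ F x) (hwx : M < w x) : M < w b := by
  by_contra! hwb
  have hclosed : IsClosed (Icc x b ∩ {r | w r ≤ M}) :=
    isClosed_Icc.isClosed_le (hwc.mono (Icc_subset_Icc_left hx.1.le)) continuousOn_const
  obtain ⟨β, ⟨⟨hxβ, hβb⟩, hwβ⟩, hβ_least⟩ :=
    (isCompact_Icc.of_isClosed_subset hclosed inter_subset_left).exists_isLeast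
      ⟨b, right_mem_Icc.2 hx.2.le, hwb⟩
  have hIco : Ico x β ⊆ Ioo a b := fun r hr => ⟨hx.1.trans_le hr.1, hr.2.trans_le hβb⟩
  have hM : ∀ r ∈ Ico x β, M < w r := fun r hr => by
    by_contra! hwr
    exact (hβ_least ⟨⟨hr.1, (hIco hr).2.le⟩, hwr⟩).not_gt hr.2
  have hF_mono : MonotoneOn F (Ico x β) :=
    monotoneOn_of_hasDerivWithinAt_nonneg (convex_Ico x β)
      (fun r hr => (hF r (hIco hr)).continuousAt.continuousWithinAt)
      (fun r hr => (hF r (hIco (interior_subset hr))).hasDerivWithinAt)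
      (fun r hr => hF' r (hIco (interior_subset hr)) (hM r (interior_subset hr)))
  have hF_nonneg : ∀ r ∈ Ico x β, 0 ≤ F r := fun r hr =>
    hFx.trans (hF_mono ⟨le_rfl, hr.1.trans_lt hr.2⟩ hr hr.1)
  have hinterior : interior (Icc x β) ⊆ Ico x β := interior_Icc.trans_subset Ioo_subset_Ico_self
  have hw_mono : MonotoneOn w (Icc x β) :=
    monotoneOn_of_hasDerivWithinAt_nonneg (convex_Icc x β)
      (hwc.mono (Icc_subset_Icc hx.1.le hβb))
      (fun r hr => (hw r (hIco (hinterior hr))).hasDerivWithinAt)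
      (fun r hr => div_nonneg (hF_nonneg r (hinterior hr)) (hP r (hIco (hinterior hr))))
  exact hwβ.not_gt (hwx.trans_le (hw_mono (left_mem_Icc.2 hxβ) (right_mem_Icc.2 hxβ) hxβ))

theorem le_of_flux_deriv_nonneg (hwc : ContinuousOn w (Icc a b))
    (hw : ∀ r ∈ Ioo a b, HasDerivAt w (F r / P r) r)
    (hF : ∀ r ∈ Ioo a b, HasDerivAt F (F' r) r)
    (hP : ∀ r ∈ Ioo a b, 0 < P r)
    (hF' : ∀ r ∈ Ioo a b, M < w r → 0 ≤ F' r) (hwa : w a ≤ M) (hwb : w b ≤ M) :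
    ∀ r ∈ Icc a b, w r ≤ M := by
  intro r hr
  obtain ⟨x, hx, hx_max⟩ := isCompact_Icc.exists_isMaxOn ⟨r, hr⟩ hwc
  suffices hwx : w x ≤ M from (hx_max hr).trans hwx
  by_contra! hwx
  have hxa : a < x := hx.1.lt_of_ne (by rintro rfl; exact hwa.not_gt hwx)
  have hxb : x < b := hx.2.lt_of_ne (by rintro rfl; exact hwb.not_gt hwx)
  have hw'x : F x / P x = 0 :=
    (hx_max.isLocalMax (Icc_mem_nhds hxa hxb)).hasDerivAt_eq_zero (hw x ⟨hxa, hxb⟩)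
  have hFx : F x = 0 := (div_eq_zero_iff.1 hw'x).resolve_right (hP x ⟨hxa, hxb⟩).ne'
  exact hwb.not_gt
    (lt_right_of_flux_nonneg ⟨hxa, hxb⟩ hwc hw hF (fun y hy => (hP y hy).le) hF' hFx.ge hwx)

end MaximumPrinciple

section Comparison

variable {a b : ℝ} {p s s' S u u' U : ℝ → ℝ} {f : ℝ → ℝ → ℝ}

theorem subsolution_le_supersolution (hp : ∀ r ∈ Ioo a b, 0 < p r)
    (hf : ∀ r ∈ Ioo a b, MonotoneOn (f r) (Ioi 0))
    (hsc : ContinuousOn s (Icc a b)) (huc : ContinuousOn u (Icc a b))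
    (hs : ∀ r ∈ Ioo a b, HasDerivAt s (s' r) r)
    (hps : ∀ r ∈ Ioo a b, HasDerivAt (fun x => p x * s' x) (S r) r)
    (hS : ∀ r ∈ Ioo a b, S r ≤ s r * f r (s r))
    (hu : ∀ r ∈ Ioo a b, HasDerivAt u (u' r) r)
    (hpu : ∀ r ∈ Ioo a b, HasDerivAt (fun x => p x * u' x) (U r) r)
    (hU : ∀ r ∈ Ioo a b, u r * f r (u r) ≤ U r)
    (hs_pos : ∀ r ∈ Icc a b, 0 < s r) (ha : u a ≤ s a) (hb : u b ≤ s b) :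
    ∀ r ∈ Icc a b, u r ≤ s r := by
  intro r hr
  have hab : a ≤ b := hr.1.trans hr.2
  have hs_pos' : ∀ x ∈ Ioo a b, 0 < s x := fun x hx => hs_pos x (Ioo_subset_Icc_self hx)
  have hquot : ∀ x ∈ Ioo a b, HasDerivAt (fun y => u y / s y)
      ((p x * u' x * s x - p x * s' x * u x) / (p x * s x ^ 2)) x := fun x hx => by
    have hpx := (hp x hx).ne'
    have hsx := (hs_pos' x hx).ne'
    refine ((hu x hx).div (hs x hx) hsx).congr_deriv ?_
    field_simp
  have hflux : ∀ x ∈ Ioo a b, HasDerivAt (fun y => p y * u' y * s y - p y * s' y * u y)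
      (U x * s x - S x * u x) x := fun x hx =>
    (((hpu x hx).mul (hs x hx)).sub ((hps x hx).mul (hu x hx))).congr_deriv (by ring)
  have hflux_nonneg : ∀ x ∈ Ioo a b, 1 < u x / s x → 0 ≤ U x * s x - S x * u x := by
    intro x hx hlt
    have hsx := hs_pos' x hx
    have hsu : s x < u x := (one_lt_div hsx).1 hlt
    have hux : 0 < u x := hsx.trans hsu
    have hfx : f x (s x) ≤ f x (u x) := hf x hx hsx hux hsu.le
    refine sub_nonneg.2 ?_
    calc S x * u x ≤ s x * f x (s x) * u x := by gcongr; exact hS x hx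
      _ ≤ s x * f x (u x) * u x := by gcongr
      _ = u x * f x (u x) * s x := by ring
      _ ≤ U x * s x := by gcongr; exact hU x hx
  have hle := le_of_flux_deriv_nonneg (huc.div hsc fun x hx => (hs_pos x hx).ne') hquot hflux
    (fun x hx => mul_pos (hp x hx) (pow_pos (hs_pos' x hx) 2)) hflux_nonneg
    (div_le_one_of_le₀ ha (hs_pos a (left_mem_Icc.2 hab)).le)
    (div_le_one_of_le₀ hb (hs_pos b (right_mem_Icc.2 hab)).le) r hr
  exact (div_le_one (hs_pos r hr)).1 hle

end Comparison

section LinearEquation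

variable {a b : ℝ} {A B : ℝ → ℝ}

theorem eq_zero_of_linear_of_eq_zero_left {E : Type*} [NormedAddCommGroup E] [NormedSpace ℝ E]
    {v v' v'' : ℝ → E} (hA : ContinuousOn A (Icc a b)) (hB : ContinuousOn B (Icc a b))
    (hv : ∀ r ∈ Icc a b, HasDerivWithinAt v (v' r) (Icc a b) r)
    (hv' : ∀ r ∈ Icc a b, HasDerivWithinAt v' (v'' r) (Icc a b) r)
    (hode : ∀ r ∈ Icc a b, v'' r = A r • v' r + B r • v r)
    (hva : v a = 0) (hv'a : v' a = 0) : ∀ r ∈ Icc a b, v r = 0 := by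
  obtain ⟨K, hK⟩ := isCompact_Icc.exists_bound_of_continuousOn (hA.norm.add hB.norm)
  have hphase : ∀ r ∈ Icc a b,
      HasDerivWithinAt (fun x => (v x, v' x)) (v' r, v'' r) (Icc a b) r :=
    fun r hr => (hv r hr).prodMk (hv' r hr)
  have hbound : ∀ r ∈ Icc a b, ‖(v' r, v'' r)‖ ≤ max 1 K * ‖(v r, v' r)‖ := by
    intro r hr
    have hv_le : ‖v r‖ ≤ ‖(v r, v' r)‖ := norm_fst_le (v r, v' r)
    have hv'_le : ‖v' r‖ ≤ ‖(v r, v' r)‖ := norm_snd_le (v r, v' r)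
    refine norm_prod_le_iff.2 ⟨hv'_le.trans ?_, ?_⟩
    · exact le_mul_of_one_le_left (norm_nonneg _) (le_max_left 1 K)
    · calc ‖v'' r‖ ≤ ‖A r‖ * ‖v' r‖ + ‖B r‖ * ‖v r‖ := by
            rw [hode r hr, ← norm_smul, ← norm_smul]
            exact norm_add_le _ _
        _ ≤ ‖A r‖ * ‖(v r, v' r)‖ + ‖B r‖ * ‖(v r, v' r)‖ := by gcongr
        _ = (‖A r‖ + ‖B r‖) * ‖(v r, v' r)‖ := by ring
        _ ≤ max 1 K * ‖(v r, v' r)‖ := by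
            gcongr
            exact (le_norm_self _).trans ((hK r hr).trans (le_max_right 1 K))
  intro r hr
  have hzero := eq_zero_of_abs_deriv_le_mul_abs_self_of_eq_zero_right
    (fun x hx => (hphase x hx).continuousWithinAt)
    (fun x hx => (hphase x (Ico_subset_Icc_self hx)).mono_of_mem_nhdsWithin
      (Icc_mem_nhdsGE_of_mem hx))
    (Prod.ext hva hv'a) (fun x hx => hbound x (Ico_subset_Icc_self hx)) r hr
  exact congrArg Prod.fst hzero

theorem pos_of_nonneg_of_linear {v v' v'' : ℝ → ℝ}
    (hA : ContinuousOn A (Icc a b)) (hB : ContinuousOn B (Icc a b))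
    (hv : ∀ r ∈ Icc a b, HasDerivWithinAt v (v' r) (Icc a b) r)
    (hv' : ∀ r ∈ Icc a b, HasDerivWithinAt v' (v'' r) (Icc a b) r)
    (hode : ∀ r ∈ Icc a b, v'' r = A r * v' r + B r * v r)
    (hnonneg : ∀ r ∈ Icc a b, 0 ≤ v r) (ha : 0 < v a) (hb : 0 < v b) :
    ∀ r ∈ Icc a b, 0 < v r := by
  intro r hr
  refine (hnonneg r hr).lt_of_ne' fun hvr => ?_
  have har : a < r := hr.1.lt_of_ne (by rintro rfl; exact ha.ne' hvr)
  have hrb : r < b := hr.2.lt_of_ne (by rintro rfl; exact hb.ne' hvr)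
  have hmin : IsLocalMin v r := by
    filter_upwards [Icc_mem_nhds har hrb] with x hx using hvr.trans_le (hnonneg x hx)
  have hv'r : v' r = 0 :=
    hmin.hasDerivAt_eq_zero ((hv r hr).hasDerivAt (Icc_mem_nhds har hrb))
  have hsub : Icc r b ⊆ Icc a b := Icc_subset_Icc_left har.le
  exact hb.ne' (eq_zero_of_linear_of_eq_zero_left (hA.mono hsub) (hB.mono hsub)
    (fun x hx => (hv x (hsub hx)).mono hsub) (fun x hx => (hv' x (hsub hx)).mono hsub)
    (fun x hx => hode x (hsub hx)) hvr hv'r b (right_mem_Icc.2 hrb.le))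

end LinearEquation

section RadialLandauDeGennes

variable {a b c k : ℝ} {v v' v'' : ℝ → ℝ}

lemma pos_of_nonneg_of_radial_landauDeGennes (ha0 : 0 < a)
    (hv : ∀ r ∈ Icc a b, HasDerivAt v (v' r) r)
    (hv' : ∀ r ∈ Icc a b, HasDerivAt v' (v'' r) r)
    (hode : ∀ r ∈ Icc a b, v'' r + v' r / r - k * v r / r ^ 2 = c * v r * (2 * v r ^ 2 - 1))
    (hnonneg : ∀ r ∈ Icc a b, 0 ≤ v r) (ha : 0 < v a) (hb : 0 < v b) :
    ∀ r ∈ Icc a b, 0 < v r := by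
  have hne : ∀ r ∈ Icc a b, r ≠ 0 := fun r hr => (ha0.trans_le hr.1).ne'
  have hvc : ContinuousOn v (Icc a b) := HasDerivAt.continuousOn hv
  have hA : ContinuousOn (fun r : ℝ => -1 / r) (Icc a b) :=
    continuousOn_const.div continuousOn_id hne
  have hB : ContinuousOn (fun r : ℝ => k / r ^ 2 + c * (2 * v r ^ 2 - 1)) (Icc a b) :=
    (continuousOn_const.div (by fun_prop) fun r hr => pow_ne_zero 2 (hne r hr)).add (by fun_prop)
  exact pos_of_nonneg_of_linear hA hB (fun r hr => (hv r hr).hasDerivWithinAt)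
    (fun r hr => (hv' r hr).hasDerivWithinAt) (fun r hr => by linear_combination hode r hr)
    hnonneg ha hb

lemma hasDerivAt_mul_deriv_of_radial_landauDeGennes {r : ℝ} (hr : r ≠ 0)
    (hv' : HasDerivAt v' (v'' r) r)
    (hode : v'' r + v' r / r - k * v r / r ^ 2 = c * v r * (2 * v r ^ 2 - 1)) :
    HasDerivAt (fun x => x * v' x) (v r * (k / r + c * r * (2 * v r ^ 2 - 1))) r := by
  refine ((hasDerivAt_id r).mul hv').congr_deriv ?_
  field_simp at hode ⊢
  simp only [id_eq]
  linear_combination hode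

lemma monotoneOn_landauDeGennes_coefficient {r : ℝ} (hc : 0 ≤ c) (hr : 0 ≤ r) :
    MonotoneOn (fun t : ℝ => k / r + c * r * (2 * t ^ 2 - 1)) (Ioi 0) := by
  intro x hx y _ hxy
  have hx0 : 0 ≤ x := (mem_Ioi.1 hx).le
  dsimp only
  gcongr

end RadialLandauDeGennes

theorem stmt_17_general {a b c k : ℝ} (ha0 : 0 < a) (hc : 0 ≤ c) {s s' s'' u u' u'' : ℝ → ℝ}
    (hds : ∀ r ∈ Icc a b, HasDerivAt s (s' r) r)
    (hds' : ∀ r ∈ Icc a b, HasDerivAt s' (s'' r) r)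
    (hdu : ∀ r ∈ Icc a b, HasDerivAt u (u' r) r)
    (hdu' : ∀ r ∈ Icc a b, HasDerivAt u' (u'' r) r)
    (hs_nonneg : ∀ r ∈ Icc a b, 0 ≤ s r)
    (hodes : ∀ r ∈ Icc a b, s'' r + s' r / r - k * s r / r ^ 2 = c * s r * (2 * s r ^ 2 - 1))
    (hodeu : ∀ r ∈ Icc a b, u'' r + u' r / r - k * u r / r ^ 2 = c * u r * (2 * u r ^ 2 - 1))
    (hsa : 0 < s a) (hsb : 0 < s b) (hua : u a ≤ s a) (hub : u b ≤ s b) :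
    ∀ r ∈ Icc a b, u r ≤ s r := by
  have hIoo : Ioo a b ⊆ Icc a b := Ioo_subset_Icc_self
  have hpos : ∀ r ∈ Ioo a b, 0 < r := fun r hr => ha0.trans hr.1
  have hs_pos := pos_of_nonneg_of_radial_landauDeGennes ha0 hds hds' hodes hs_nonneg hsa hsb
  exact subsolution_le_supersolution hpos
    (fun r hr => monotoneOn_landauDeGennes_coefficient hc (hpos r hr).le)
    (HasDerivAt.continuousOn hds) (HasDerivAt.continuousOn hdu)
    (fun r hr => hds r (hIoo hr))
    (fun r hr => hasDerivAt_mul_deriv_of_radial_landauDeGennes (hpos r hr).ne'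
      (hds' r (hIoo hr)) (hodes r (hIoo hr)))
    (fun _ _ => le_rfl)
    (fun r hr => hdu r (hIoo hr))
    (fun r hr => hasDerivAt_mul_deriv_of_radial_landauDeGennes (hpos r hr).ne'
      (hdu' r (hIoo hr)) (hodeu r (hIoo hr)))
    (fun _ _ => le_rfl)
    hs_pos hua hub

/-- With `0 < b₀ < 1` and `c > 0`, suppose `s, u` are twice continuously
differentiable, nonnegative, both satisfy `v'' + v'/r − 4v/r² = c v(2v² − 1)` on
`[b₀,1]`, with `s b₀ = s 1 = 1/√2`, `u b₀ = 0`, `u 1 = 1/√2`, and `u` strictly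
increasing on `[b₀,1]`. Then `u ≤ s` on `[b₀,1]`. -/
theorem stmt_17 (b₀ c : ℝ) (hb0 : 0 < b₀) (hb1 : b₀ < 1) (hc : 0 < c)
    (s s' s'' u u' u'' : ℝ → ℝ)
    (hds : ∀ r ∈ Icc b₀ 1, HasDerivAt s (s' r) r)
    (hds' : ∀ r ∈ Icc b₀ 1, HasDerivAt s' (s'' r) r)
    (hs''c : ContinuousOn s'' (Icc b₀ 1))
    (hdu : ∀ r ∈ Icc b₀ 1, HasDerivAt u (u' r) r)
    (hdu' : ∀ r ∈ Icc b₀ 1, HasDerivAt u' (u'' r) r)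
    (hu''c : ContinuousOn u'' (Icc b₀ 1))
    (hsnn : ∀ r ∈ Icc b₀ 1, 0 ≤ s r)
    (hunn : ∀ r ∈ Icc b₀ 1, 0 ≤ u r)
    (hodes : ∀ r ∈ Icc b₀ 1,
      s'' r + s' r / r - 4 * s r / r ^ 2 = c * s r * (2 * (s r) ^ 2 - 1))
    (hodeu : ∀ r ∈ Icc b₀ 1,
      u'' r + u' r / r - 4 * u r / r ^ 2 = c * u r * (2 * (u r) ^ 2 - 1))
    (hsb : s b₀ = 1 / Real.sqrt 2) (hs1 : s 1 = 1 / Real.sqrt 2)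
    (hub : u b₀ = 0) (hu1 : u 1 = 1 / Real.sqrt 2)
    (humono : StrictMonoOn u (Icc b₀ 1)) :
    ∀ r ∈ Icc b₀ 1, u r ≤ s r := by
  have hq : 0 < 1 / Real.sqrt 2 := by positivity
  exact stmt_17_general hb0 hc.le hds hds' hdu hdu' hsnn hodes hodeu (hsb ▸ hq) (hs1 ▸ hq)
    (hub.trans_le (hsnn b₀ (left_mem_Icc.2 hb1.le))) (hu1.trans hs1.symm).le
end

section
/- Let 0<b₀<1 and c > 0. Suppose s:[b₀,1]→ℝ is twice continuously differentiable, strictly positive, satisfies s''(r) + s'(r)/r − 4 s(r)/r² = c · s(r)(2 s(r)² − 1) on [b₀,1], and s(b₀) = s(1) = 1/√2. Then s(r)² ≥ 1/2 − 2/(c b₀²) for all r ∈ [b₀,1]. In particular, min_{[b₀,1]} s → 1/√2 as c → ∞. -/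
open Real Set

/-!
This is a maximum-principle argument. At an interior minimum point `x` one has `s' x = 0` and
`0 ≤ s'' x`; dividing the equation by `s x > 0` removes the drift and leaves
`0 ≤ q x + c (2 (s x)² - 1)`, with `q x = 4 / x²` in the radial case. On the boundary `s² = 1/2`, so
the lower bound for `s²` holds at the minimum, hence everywhere. Since the minimum `m` satisfies
`0 < m ≤ 1/√2`, one gets `(1/√2 - m)² ≤ 1/2 - m² = O(1/c)`.
-/

/-- `IsOrderProfile p q c a b s s' s''`: the function `s`, with derivatives `s'` and `s''` on
`(a, b)`, is a positive classical solution of `s'' + p s' - q s = c s (2 s² - 1)` on `(a, b)`,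
continuous up to the boundary, where it equals `1/√2`. The scalar order parameter of the
Landau–de Gennes model on an annulus has drift `p r = 1 / r` and potential `q r = 4 / r²`. The
derivatives are arguments, so that differentiability is part of the notion. -/
structure IsOrderProfile (p q : ℝ → ℝ) (c a b : ℝ) (s s' s'' : ℝ → ℝ) : Prop where
  continuousOn : ContinuousOn s (Icc a b)
  hasDerivAt : ∀ r ∈ Ioo a b, HasDerivAt s (s' r) r
  hasDerivAt_deriv : ∀ r ∈ Ioo a b, HasDerivAt s' (s'' r) r
  pos : ∀ r ∈ Icc a b, 0 < s r
  equation : ∀ r ∈ Ioo a b, s'' r + p r * s' r - q r * s r = c * s r * (2 * s r ^ 2 - 1)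
  left_eq : s a = 1 / √2
  right_eq : s b = 1 / √2

/-- If `f''(x) < 0`, the second derivative test makes `x` a local maximum as well, so `f` is locally
constant and `f''(x) = 0`. -/
lemma deriv_deriv_nonneg_of_isLocalMin {f : ℝ → ℝ} {x : ℝ} (hmin : IsLocalMin f x)
    (hf : ContinuousAt f x) : 0 ≤ deriv (deriv f) x := by
  by_contra! hneg
  have hmax : IsLocalMax f x := isLocalMax_of_deriv_deriv_neg hneg hmin.deriv_eq_zero hf
  have hconst : f =ᶠ[nhds x] fun _ => f x := by
    filter_upwards [hmin, hmax] with y hge hle using le_antisymm hle hge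
  have hzero : deriv (deriv f) x = 0 := by simp [hconst.deriv.deriv_eq]
  exact hneg.ne hzero

namespace IsOrderProfile

variable {p q s s' s'' : ℝ → ℝ} {a b c M x r : ℝ}

lemma second_deriv_nonneg_of_isLocalMin (h : IsOrderProfile p q c a b s s' s'')
    (hx : x ∈ Ioo a b) (hmin : IsLocalMin s x) : 0 ≤ s'' x := by
  have hderiv : deriv s =ᶠ[nhds x] s' := by
    filter_upwards [isOpen_Ioo.mem_nhds hx] with y hy using (h.hasDerivAt y hy).deriv
  rw [← (h.hasDerivAt_deriv x hx).deriv, ← hderiv.deriv_eq]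
  exact deriv_deriv_nonneg_of_isLocalMin hmin (h.hasDerivAt x hx).continuousAt

lemma half_sub_le_sq_of_isLocalMin (h : IsOrderProfile p q c a b s s' s'') (hc : 0 < c)
    (hx : x ∈ Ioo a b) (hmin : IsLocalMin s x) : 1 / 2 - q x / (2 * c) ≤ s x ^ 2 := by
  have hs' : s' x = 0 := hmin.hasDerivAt_eq_zero (h.hasDerivAt x hx)
  have hfactor : s'' x = s x * (q x + c * (2 * s x ^ 2 - 1)) := by
    linear_combination h.equation x hx - p x * hs'
  have hnonneg : 0 ≤ q x + c * (2 * s x ^ 2 - 1) :=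
    nonneg_of_mul_nonneg_right (hfactor ▸ h.second_deriv_nonneg_of_isLocalMin hx hmin)
      (h.pos x (Ioo_subset_Icc_self hx))
  have hdiv : 1 / 2 - s x ^ 2 ≤ q x / (2 * c) := by
    rw [le_div_iff₀ (by positivity)]
    linarith
  linarith

lemma half_sub_le_sq (h : IsOrderProfile p q c a b s s' s'') (hc : 0 < c) (hM : 0 ≤ M)
    (hq : ∀ t ∈ Ioo a b, q t ≤ M) (hr : r ∈ Icc a b) : 1 / 2 - M / (2 * c) ≤ s r ^ 2 := by
  obtain ⟨x, hx, hmin⟩ := isCompact_Icc.exists_isMinOn ⟨r, hr⟩ h.continuousOn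
  suffices hxbound : 1 / 2 - M / (2 * c) ≤ s x ^ 2 from
    hxbound.trans (pow_le_pow_left₀ (h.pos x hx).le (hmin hr) 2)
  have hboundary : 1 / 2 - M / (2 * c) ≤ (1 / √2) ^ 2 := by
    rw [div_pow, one_pow, sq_sqrt zero_le_two]
    exact sub_le_self _ (by positivity)
  rcases eq_endpoints_or_mem_Ioo_of_mem_Icc hx with rfl | rfl | hx
  · rwa [h.left_eq]
  · rwa [h.right_eq]
  · calc
      1 / 2 - M / (2 * c) ≤ 1 / 2 - q x / (2 * c) := by gcongr; exact hq x hx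
      _ ≤ s x ^ 2 :=
        h.half_sub_le_sq_of_isLocalMin hc hx (hmin.isLocalMin (Icc_mem_nhds hx.1 hx.2))

lemma sq_sInf_image_sub_le (h : IsOrderProfile p q c a b s s' s'') (hc : 0 < c) (hab : a ≤ b)
    (hM : 0 ≤ M) (hq : ∀ t ∈ Ioo a b, q t ≤ M) :
    (sInf (s '' Icc a b) - 1 / √2) ^ 2 ≤ M / (2 * c) := by
  obtain ⟨x, hx, hinf, hmin⟩ :=
    isCompact_Icc.exists_sInf_image_eq_and_le (nonempty_Icc.2 hab) h.continuousOn
  have hle : s x ≤ 1 / √2 := h.left_eq ▸ hmin a (left_mem_Icc.2 hab)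
  have hcross : 0 ≤ s x * (1 / √2 - s x) := mul_nonneg (h.pos x hx).le (sub_nonneg.2 hle)
  rw [hinf]
  calc
    (s x - 1 / √2) ^ 2 = (1 / √2) ^ 2 - s x ^ 2 - 2 * (s x * (1 / √2 - s x)) := by ring
    _ ≤ (1 / √2) ^ 2 - s x ^ 2 := by linarith
    _ = 1 / 2 - s x ^ 2 := by rw [div_pow, one_pow, sq_sqrt zero_le_two]
    _ ≤ M / (2 * c) := sub_le_comm.1 (h.half_sub_le_sq hc hM hq hx)

lemma of_radial (hs : ∀ r ∈ Icc a b, HasDerivAt s (s' r) r)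
    (hs' : ∀ r ∈ Icc a b, HasDerivAt s' (s'' r) r) (hpos : ∀ r ∈ Icc a b, 0 < s r)
    (hode : ∀ r ∈ Icc a b,
      s'' r + s' r / r - 4 * s r / r ^ 2 = c * s r * (2 * (s r) ^ 2 - 1))
    (ha : s a = 1 / √2) (hb : s b = 1 / √2) :
    IsOrderProfile (fun r => 1 / r) (fun r => 4 / r ^ 2) c a b s s' s'' where
  continuousOn r hr := (hs r hr).continuousAt.continuousWithinAt
  hasDerivAt r hr := hs r (Ioo_subset_Icc_self hr)
  hasDerivAt_deriv r hr := hs' r (Ioo_subset_Icc_self hr)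
  pos := hpos
  equation r hr := by linear_combination hode r (Ioo_subset_Icc_self hr)
  left_eq := ha
  right_eq := hb

end IsOrderProfile

theorem stmt_18_general {p q : ℝ → ℝ} {a b M : ℝ} (hab : a ≤ b) (hM : 0 ≤ M)
    (hq : ∀ r ∈ Ioo a b, q r ≤ M) :
    (∀ c : ℝ, 0 < c → ∀ s s' s'' : ℝ → ℝ, IsOrderProfile p q c a b s s' s'' →
      ∀ r ∈ Icc a b, 1 / 2 - M / (2 * c) ≤ s r ^ 2) ∧
    (∀ ε : ℝ, 0 < ε → ∃ C : ℝ, ∀ c : ℝ, C ≤ c → ∀ s s' s'' : ℝ → ℝ,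
      IsOrderProfile p q c a b s s' s'' → |sInf (s '' Icc a b) - 1 / √2| < ε) := by
  refine ⟨fun c hc s s' s'' h r hr => h.half_sub_le_sq hc hM hq hr, fun ε hε => ?_⟩
  have hlim : Filter.Tendsto (fun c : ℝ => M / (2 * c)) Filter.atTop (nhds 0) :=
    tendsto_const_nhds.div_atTop (Filter.tendsto_id.const_mul_atTop two_pos)
  obtain ⟨C, hC⟩ := Filter.eventually_atTop.1
    ((hlim.eventually_lt_const (pow_pos hε 2)).and (Filter.eventually_gt_atTop 0))
  refine ⟨C, fun c hCc s s' s'' h => ?_⟩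
  obtain ⟨hsmall, hc⟩ := hC c hCc
  exact abs_lt_of_sq_lt_sq ((h.sq_sInf_image_sub_le hc hab hM hq).trans_lt hsmall) hε.le

/-- For `0 < b₀ < 1`: (a) for every `c > 0` and every twice continuously
differentiable, strictly positive `s` satisfying `s'' + s'/r − 4s/r² = c s(2s² − 1)` on
`[b₀,1]` with `s b₀ = s 1 = 1/√2`, one has `s² ≥ 1/2 − 2/(c b₀²)` on `[b₀,1]`;
(b) in particular, `min_{[b₀,1]} s → 1/√2` as `c → ∞`, uniformly over such `s`. -/
theorem stmt_18 (b₀ : ℝ) (hb0 : 0 < b₀) (hb1 : b₀ < 1) :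
    (∀ c : ℝ, 0 < c → ∀ s s' s'' : ℝ → ℝ,
      (∀ r ∈ Icc b₀ 1, HasDerivAt s (s' r) r) →
      (∀ r ∈ Icc b₀ 1, HasDerivAt s' (s'' r) r) →
      ContinuousOn s'' (Icc b₀ 1) →
      (∀ r ∈ Icc b₀ 1, 0 < s r) →
      (∀ r ∈ Icc b₀ 1,
        s'' r + s' r / r - 4 * s r / r ^ 2 = c * s r * (2 * (s r) ^ 2 - 1)) →
      s b₀ = 1 / Real.sqrt 2 → s 1 = 1 / Real.sqrt 2 →
      ∀ r ∈ Icc b₀ 1, 1 / 2 - 2 / (c * b₀ ^ 2) ≤ (s r) ^ 2) ∧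
    (∀ ε : ℝ, 0 < ε → ∃ C : ℝ, ∀ c : ℝ, C ≤ c → ∀ s s' s'' : ℝ → ℝ,
      (∀ r ∈ Icc b₀ 1, HasDerivAt s (s' r) r) →
      (∀ r ∈ Icc b₀ 1, HasDerivAt s' (s'' r) r) →
      ContinuousOn s'' (Icc b₀ 1) →
      (∀ r ∈ Icc b₀ 1, 0 < s r) →
      (∀ r ∈ Icc b₀ 1,
        s'' r + s' r / r - 4 * s r / r ^ 2 = c * s r * (2 * (s r) ^ 2 - 1)) →
      s b₀ = 1 / Real.sqrt 2 → s 1 = 1 / Real.sqrt 2 →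
      |sInf (s '' Icc b₀ 1) - 1 / Real.sqrt 2| < ε) := by
  have hq : ∀ r ∈ Ioo b₀ 1, 4 / r ^ 2 ≤ 4 / b₀ ^ 2 := fun r hr => by gcongr; exact hr.1.le
  have hconst (c : ℝ) : 4 / b₀ ^ 2 / (2 * c) = 2 / (c * b₀ ^ 2) := by ring
  obtain ⟨hbound, hlim⟩ := stmt_18_general (p := fun r => 1 / r) hb1.le (by positivity) hq
  exact ⟨fun c hc s s' s'' hs hs' _ hpos hode h0 h1 r hr => hconst c ▸
      hbound c hc s s' s'' (.of_radial hs hs' hpos hode h0 h1) r hr,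
    fun ε hε => (hlim ε hε).imp fun C hC c hc s s' s'' hs hs' _ hpos hode h0 h1 =>
      hC c hc s s' s'' (.of_radial hs hs' hpos hode h0 h1)⟩
end
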